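/- arXiv:math/0602143 — 4 statements merged into one kernel-verified Lean document; each statement's English description precedes it below -/
import Mathlib

section
/- The generating function of the class of skew-merged permutations is (1−3x)/((1−2x)√(1−4x)); that is, if s_n denotes the number of skew-merged permutations of length n, then ∑_{n≥0} s_n x^n = (1−3x)/((1−2x)√(1−4x)). -/
/-- A permutation is skew-merged if it is the union of an increasing subsequence and a
decreasing subsequence. -/
def SkewMerged {n : ℕ} (π : Equiv.Perm (Fin n)) : Prop :=
  ∃ A : Set (Fin n),
    (∀ i ∈ A, ∀ j ∈ A, i < j → π i < π j) ∧
    (∀ i ∉ A, ∀ j ∉ A, i < j → π j < π i)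

lemma sm_choose_rec (n : ℕ) : ((n:ℝ)+1) * Ring.choose (-(1/2) : ℝ) (n+1) = (-(1/2) - n) * Ring.choose (-(1/2) : ℝ) n := by
  rw [Ring.choose_eq_smul, Ring.choose_eq_smul, descPochhammer_succ_right, Polynomial.smeval_mul, Nat.factorial_succ]
  have h : ((n:ℝ)+1) ≠ 0 := by positivity
  have h' : ((n.factorial:ℝ)) ≠ 0 := by positivity
  simp [Polynomial.smeval_natCast, Polynomial.smeval_sub]
  field_simp

lemma sm_choose_central (n : ℕ) : Ring.choose (-(1/2) : ℝ) n * (-4)^n = (n.centralBinom : ℝ) := by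
  induction n with
  | zero => simp
  | succ n ih =>
    have h1 := sm_choose_rec n
    have h2 : ((n:ℝ)+1) * ((n+1).centralBinom : ℝ) = 2 * (2*n+1) * n.centralBinom := by
      exact_mod_cast Nat.succ_mul_centralBinom_succ n
    have h : ((n:ℝ)+1) ≠ 0 := by positivity
    apply mul_left_cancel₀ h
    rw [h2, ← ih, pow_succ]
    linear_combination ((-4)^n * (-4)) * h1

lemma sm_hasSum_central (x : ℝ) (hx : |x| < 1/4) :
    HasSum (fun n : ℕ => (n.centralBinom : ℝ) * x^n) (1 / Real.sqrt (1 - 4*x)) := by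
  have h := (Real.one_add_rpow_hasFPowerSeriesOnBall_zero (a := -(1/2))).hasSum (y := -4*x) (by
    simp only [Metric.mem_eball, edist_zero_right]
    rw [← ofReal_norm, Real.norm_eq_abs, ENNReal.ofReal_lt_one, abs_mul]
    norm_num; linarith)
  simp only [zero_add, binomialSeries_apply] at h
  have hp : 0 < 1 - 4*x := by have := (abs_lt.1 hx).2; linarith
  convert! h using 1
  · ext n
    rw [← sm_choose_central]; simp [List.ofFn_const]; ring
  · rw [Real.sqrt_eq_rpow, Real.rpow_neg (by linarith)]
    simp [← sub_eq_add_neg]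

lemma sm_final (s e : ℕ → ℕ) (h0 : e 0 = 0) (h1 : ∀ n, e (n+1) = n.centralBinom + 2 * e n)
    (h2 : ∀ n, s n + e n = n.centralBinom) (x : ℝ) (hx : |x| < 1/4) :
    ∑' n : ℕ, (s n : ℝ) * x^n = (1 - 3 * x) / ((1 - 2 * x) * Real.sqrt (1 - 4 * x)) := by
  have hc := sm_hasSum_central x hx
  have hcabs := (sm_hasSum_central (|x|) (by simpa using hx)).summable
  have he : Summable (fun n => (e n : ℝ) * x^n) := by
    refine Summable.of_norm_bounded hcabs (fun n => ?_)
    rw [norm_mul, norm_pow, Real.norm_eq_abs, Real.norm_eq_abs, Nat.abs_cast]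
    gcongr
    have := h2 n; omega
  obtain ⟨E, hE⟩ := he
  have hE2 : HasSum (fun n => (e n : ℝ) * x^n) (x * (1 / Real.sqrt (1 - 4*x)) + 2 * x * E) := by
    rw [← hasSum_nat_add_iff' 1]
    convert! (hc.mul_left x).add (hE.mul_left (2*x)) using 1
    · ext n; rw [h1]; push_cast; ring
    · simp [h0]
  have hEE := hE.unique hE2
  have hs : HasSum (fun n => (s n : ℝ) * x^n) (1 / Real.sqrt (1 - 4*x) - E) := by
    convert! hc.sub hE using 1
    ext n; rw [← h2 n]; push_cast; ring
  rw [hs.tsum_eq]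
  have ha := (abs_lt.1 hx).2
  have hp : 0 < Real.sqrt (1 - 4*x) := Real.sqrt_pos.2 (by linarith)
  have hq : (1 - 2*x) ≠ 0 := by intro h; linarith
  have : E = x * (1 / Real.sqrt (1 - 4*x)) / (1 - 2*x) := by
    rw [eq_div_iff hq]; linarith
  rw [this, eq_div_iff (mul_ne_zero hq hp.ne')]
  have e1 : x * (1 / Real.sqrt (1 - 4*x)) / (1 - 2*x) * (1 - 2*x) = x * (1 / Real.sqrt (1 - 4*x)) :=
    div_mul_cancel₀ _ hq
  have e2 : 1 / Real.sqrt (1 - 4*x) * Real.sqrt (1 - 4*x) = 1 := by field_simp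
  linear_combination (1 - 2*x - x) * e2 - Real.sqrt (1 - 4*x) * e1

/-- validity -/
def SMValid {n : ℕ} (π : Equiv.Perm (Fin n)) (A : Finset (Fin n)) : Prop :=
  (∀ i ∈ A, ∀ j ∈ A, i < j → π i < π j) ∧ (∀ i ∉ A, ∀ j ∉ A, i < j → π j < π i)

/-- quadrant set -/
def SMQ {n : ℕ} (π : Equiv.Perm (Fin n)) (p v : ℕ) : Finset (Fin n) :=
  Finset.univ.filter (fun x => (x : ℕ) < p ↔ (π x : ℕ) < v)

lemma mem_SMQ {n : ℕ} (π : Equiv.Perm (Fin n)) (p v : ℕ) (x : Fin n) :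
    x ∈ SMQ π p v ↔ ((x : ℕ) < p ↔ (π x : ℕ) < v) := by simp [SMQ]

/-- center -/
def SMCenter {n : ℕ} (π : Equiv.Perm (Fin n)) (c : Fin n) : Prop := SMValid π (SMQ π c (π c))

/-- abstract star lemma -/
lemma sm_star {α : Type*} [Fintype α] [DecidableEq α] (V : Finset (Finset α)) (hne : V.Nonempty)
    (h1 : ∀ A ∈ V, ∀ B ∈ V, (A \ B).card ≤ 1)
    (h2 : ∀ A ∈ V, ∀ B ∈ V, ¬ A ⊆ B → ¬ B ⊆ A → A ∪ B ∈ V ∨ A ∩ B ∈ V) :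
    V.card = 1 + (Finset.univ.filter
      (fun q : Finset α × α => q.2 ∉ q.1 ∧ q.1 ∈ V ∧ insert q.2 q.1 ∈ V)).card := by
  have h1' : ∀ A ∈ V, ∀ B ∈ V, ∀ x y, x ∈ A → x ∉ B → y ∈ A → y ∉ B → x = y := by
    intro A hA B hB x y hx hx' hy hy'
    exact Finset.card_le_one.1 (h1 A hA B hB) x (by simp [*]) y (by simp [*])
  have key : (∃ S ∈ V, ∀ X ∈ V, S ⊆ X) ∨ (∃ S ∈ V, ∀ X ∈ V, X ⊆ S) := by
    obtain ⟨A, hA, hmin⟩ := Finset.exists_min_image V Finset.card hne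
    by_cases hall : ∀ X ∈ V, A ⊆ X
    · exact Or.inl ⟨A, hA, hall⟩
    right
    push Not at hall
    obtain ⟨X, hX, hAX⟩ := hall
    have hXA : ¬ X ⊆ A := fun h => hAX (Finset.eq_of_subset_of_card_le h (hmin X hX)).symm.subset
    have hU : A ∪ X ∈ V := by
      rcases h2 A hA X hX hAX hXA with h | h
      · exact h
      · exfalso
        have := hmin _ h
        have h3 := Finset.eq_of_subset_of_card_le Finset.inter_subset_left this
        exact hAX (Finset.inter_eq_left.1 h3)
    refine ⟨_, hU, fun Y hY y hy => ?_⟩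
    by_contra hyS
    obtain ⟨a, ha, ha'⟩ := Finset.not_subset.1 hAX
    obtain ⟨x, hx, hx'⟩ := Finset.not_subset.1 hXA
    simp only [Finset.mem_union, not_or] at hyS
    have e1 : a ∉ Y := fun h => by
      have := h1' Y hY X hX a y h ha' hy hyS.2
      subst this; exact hyS.1 ha
    have e2 : x ∉ Y := fun h => by
      have := h1' Y hY A hA x y h hx' hy hyS.1
      subst this; exact hyS.2 hx
    have := h1' _ hU Y hY a x (by simp [ha]) e1 (by simp [hx]) e2
    subst this; exact hx' ha
  rcases key with ⟨S, hS, hsub⟩ | ⟨S, hS, hsub⟩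
  · rw [← Finset.card_erase_add_one hS, add_comm]
    congr 1
    symm
    refine Finset.card_bij (fun q _ => insert q.2 q.1) ?_ ?_ ?_
    · rintro ⟨A, a⟩ h
      simp only [Finset.mem_filter, Finset.mem_univ, true_and] at h
      simp only [Finset.mem_erase]
      refine ⟨fun he => h.1 (hsub A h.2.1 (he ▸ Finset.mem_insert_self a A)), h.2.2⟩
    · have aux : ∀ A a, a ∉ A → A ∈ V → insert a A ∈ V → A = S := by
        intro A a ha hA hI
        apply Finset.Subset.antisymm _ (hsub A hA)
        intro x hx
        by_contra hxS
        have := h1' _ hI S hS x a (by simp [hx]) hxS (by simp) (fun h => ha (hsub A hA h))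
        subst this; exact ha hx
      rintro ⟨A, a⟩ h ⟨B, b⟩ h' he
      simp only [Finset.mem_filter, Finset.mem_univ, true_and] at h h' he
      have e1 := aux A a h.1 h.2.1 h.2.2
      have e2 := aux B b h'.1 h'.2.1 h'.2.2
      rw [e1, e2] at he
      rw [e1] at h
      have : a ∈ insert b S := he ▸ Finset.mem_insert_self a S
      simp [h.1] at this
      simp [this, e1, e2]
    · intro X hX
      rw [Finset.mem_erase] at hX
      have hSX := hsub X hX.2
      obtain ⟨a, ha, ha'⟩ := Finset.not_subset.1 (fun h => hX.1 (Finset.Subset.antisymm h hSX))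
      have : insert a S = X := by
        ext y
        rw [Finset.mem_insert]
        constructor
        · rintro (rfl | h)
          · exact ha
          · exact hSX h
        · intro hy
          by_cases hyS : y ∈ S
          · exact Or.inr hyS
          · exact Or.inl (h1' X hX.2 S hS y a hy hyS ha ha')
      exact ⟨(S, a), by simp [ha', hS, this, hX.2], this⟩
  · rw [← Finset.card_erase_add_one hS, add_comm]
    congr 1
    symm
    refine Finset.card_bij (fun q _ => q.1) ?_ ?_ ?_
    · rintro ⟨A, a⟩ h
      simp only [Finset.mem_filter, Finset.mem_univ, true_and] at h
      simp only [Finset.mem_erase]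
      refine ⟨fun he => h.1 (he ▸ hsub _ h.2.2 (Finset.mem_insert_self a A)), h.2.1⟩
    · rintro ⟨A, a⟩ h ⟨B, b⟩ h' he
      simp only [Finset.mem_filter, Finset.mem_univ, true_and] at h h' he
      subst he
      have := h1' S hS A h.2.1 a b (hsub _ h.2.2 (Finset.mem_insert_self a A)) h.1
        (hsub _ h'.2.2 (Finset.mem_insert_self b A)) h'.1
      simp [this]
    · intro X hX
      rw [Finset.mem_erase] at hX
      have hSX := hsub X hX.2
      obtain ⟨a, ha, ha'⟩ := Finset.not_subset.1 (fun h => hX.1 (Finset.Subset.antisymm hSX h))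
      have : insert a X = S := by
        ext y
        rw [Finset.mem_insert]
        constructor
        · rintro (rfl | h)
          · exact ha
          · exact hSX h
        · intro hy
          by_cases hyS : y ∈ X
          · exact Or.inr hyS
          · exact Or.inl (h1' S hS X hX.2 y a hy hyS ha ha')
      exact ⟨(X, a), by simp [ha', hX.2, this, hS], rfl⟩

/-- convex lemma -/
lemma sm_convex (n : ℕ) (P : Finset (Fin (n+1))) (hne : P.Nonempty) 
    (h : ∀ p ∈ P, ∀ q ∈ P, ∀ x : Fin n, p ≤ x.castSucc → x.castSucc < q → x.castSucc ∈ P ∧ x.succ ∈ P) :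
    P.card = 1 + (Finset.univ.filter (fun x : Fin n => x.castSucc ∈ P ∧ x.succ ∈ P)).card := by
  set M := P.max' hne with hM
  have hMP : M ∈ P := P.max'_mem hne
  rw [← Finset.card_erase_add_one hMP, add_comm]
  congr 1
  symm
  refine Finset.card_bij (fun x _ => x.castSucc) ?_ ?_ ?_
  · intro x hx
    simp only [Finset.mem_filter, Finset.mem_univ, true_and] at hx
    rw [Finset.mem_erase]
    refine ⟨fun he => ?_, hx.1⟩
    have := P.le_max' _ hx.2
    rw [← hM, ← he] at this
    simp [Fin.le_def] at this
  · intro x _ y _ he; exact Fin.castSucc_injective _ he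
  · intro p hp
    rw [Finset.mem_erase] at hp
    have hlt : p < M := lt_of_le_of_ne (P.le_max' _ hp.2) hp.1
    have hpn : (p : ℕ) < n := by have := M.2; rw [Fin.lt_def] at hlt; omega
    refine ⟨⟨p, hpn⟩, ?_, by ext; simp⟩
    simp only [Finset.mem_filter, Finset.mem_univ, true_and]
    exact h p hp.2 M hMP ⟨p, hpn⟩ (le_refl (p : ℕ)) hlt

open Classical in
lemma sm_valid_card {n : ℕ} (π : Equiv.Perm (Fin n)) (A B : Finset (Fin n)) (hA : SMValid π A)
    (hB : SMValid π B) (x y : Fin n) (hx : x ∈ A) (hx' : x ∉ B) (hy : y ∈ A) (hy' : y ∉ B) :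
    x = y := by
  rcases lt_trichotomy x y with h | h | h
  · exact absurd (hA.1 x hx y hy h) (hB.2 x hx' y hy' h).not_gt
  · exact h
  · exact absurd (hA.1 y hy x hx h) (hB.2 y hy' x hx' h).not_gt

open Classical in
lemma sm_valid_union {n : ℕ} (π : Equiv.Perm (Fin n)) (A B : Finset (Fin n)) (hA : SMValid π A)
    (hB : SMValid π B) (h1 : ¬ A ⊆ B) (h2 : ¬ B ⊆ A) :
    SMValid π (A ∪ B) ∨ SMValid π (A ∩ B) := by
  obtain ⟨u, hu, hu'⟩ := Finset.not_subset.1 h1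
  obtain ⟨v, hv, hv'⟩ := Finset.not_subset.1 h2
  have k1 := fun x hx hx' => sm_valid_card π A B hA hB x u hx hx' hu hu'
  have k2 := fun x hx hx' => sm_valid_card π B A hB hA x v hx hx' hv hv'
  have huv : u ≠ v := fun h => hu' (h ▸ hv)
  have hpuv : π u ≠ π v := fun h => huv (π.injective h)
  obtain ⟨A1, A2⟩ := hA
  obtain ⟨B1, B2⟩ := hB
  by_cases h : (u < v ↔ π u < π v)
  · left
    constructor
    · intro i hi j hj hij
      rw [Finset.mem_union] at hi hj
      by_cases a1 : i ∈ A <;> by_cases a2 : j ∈ A <;> by_cases b1 : i ∈ B <;> by_cases b2 : j ∈ B <;> grind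
    · intro i hi j hj hij
      rw [Finset.mem_union, not_or] at hi hj
      exact A2 i hi.1 j hj.1 hij
  · right
    constructor
    · intro i hi j hj hij
      rw [Finset.mem_inter] at hi hj
      exact A1 i hi.1 j hj.1 hij
    · intro i hi j hj hij
      rw [Finset.mem_inter] at hi hj
      by_cases a1 : i ∈ A <;> by_cases a2 : j ∈ A <;> by_cases b1 : i ∈ B <;> by_cases b2 : j ∈ B <;> grind

lemma sm_center_self {n : ℕ} (π : Equiv.Perm (Fin n)) (c : Fin n) : c ∈ SMQ π c (π c) := by
  simp [mem_SMQ]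

open Classical in
lemma sm_center_erase {n : ℕ} (π : Equiv.Perm (Fin n)) (c : Fin n) (h : SMCenter π c) :
    SMValid π ((SMQ π c (π c)).erase c) := by
  obtain ⟨h1, h2⟩ := h
  constructor
  · intro i hi j hj hij
    exact h1 i (Finset.mem_of_mem_erase hi) j (Finset.mem_of_mem_erase hj) hij
  · intro i hi j hj hij
    have hp : π i ≠ π j := fun h => hij.ne (π.injective h)
    rw [Finset.mem_erase, not_and_or, not_not, mem_SMQ] at hi hj
    have h3 := h2 i
    have h4 := h3
    rw [mem_SMQ] at h3
    rcases hi with rfl | hi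
    · rcases hj with rfl | hj
      · exact absurd hij (lt_irrefl _)
      · simp only [Fin.lt_def, ne_eq, Fin.ext_iff] at *; omega
    · rcases hj with rfl | hj
      · simp only [Fin.lt_def, ne_eq, Fin.ext_iff] at *; omega
      · exact h2 i (by rwa [mem_SMQ]) j (by rwa [mem_SMQ]) hij

open Classical in
lemma sm_edge_eq {n : ℕ} (π : Equiv.Perm (Fin n)) (A : Finset (Fin n)) (a : Fin n) (ha : a ∉ A)
    (h1 : SMValid π A) (h2 : SMValid π (insert a A)) : insert a A = SMQ π a (π a) := by
  ext x
  rw [mem_SMQ]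
  rcases eq_or_ne x a with rfl | hxa
  · simp
  have hp : π x ≠ π a := fun h => hxa (π.injective h)
  by_cases hx : x ∈ A
  · have e1 := h2.1 x (by simp [hx]) a (by simp)
    have e2 := h2.1 a (by simp) x (by simp [hx])
    simp only [Fin.lt_def, ne_eq, Fin.ext_iff] at *
    simp only [Finset.mem_insert, hx, or_true, true_iff]
    omega
  · have e1 := h1.2 x hx a ha
    have e2 := h1.2 a ha x hx
    simp only [Finset.mem_insert, hx, or_false, hxa, false_iff]
    simp only [Fin.lt_def, ne_eq, Fin.ext_iff] at *
    omega

open Classical in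
lemma sm_count_valid {n : ℕ} (π : Equiv.Perm (Fin n)) :
    (Finset.univ.filter (SMValid π)).card = (if SkewMerged π then 1 else 0) +
      (Finset.univ.filter (SMCenter π)).card := by
  split_ifs with hs
  · obtain ⟨A, hA1, hA2⟩ := hs
    rw [sm_star (Finset.univ.filter (SMValid π))]
    · congr 1
      refine Finset.card_bij (fun q _ => q.2) ?_ ?_ ?_
      · rintro ⟨A, a⟩ h
        simp only [Finset.mem_filter, Finset.mem_univ, true_and] at h ⊢
        rw [SMCenter, ← sm_edge_eq π A a h.1 h.2.1 h.2.2]; exact h.2.2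
      · rintro ⟨A, a⟩ h ⟨B, b⟩ h' he
        simp only [Finset.mem_filter, Finset.mem_univ, true_and] at h h' he
        subst he
        have e1 := sm_edge_eq π A a h.1 h.2.1 h.2.2
        have e2 := sm_edge_eq π B a h'.1 h'.2.1 h'.2.2
        rw [← Finset.erase_insert h.1, ← Finset.erase_insert h'.1, e1, e2]
      · intro c hc
        simp only [Finset.mem_filter, Finset.mem_univ, true_and] at hc
        refine ⟨((SMQ π c (π c)).erase c, c), ?_, rfl⟩
        simp only [Finset.mem_filter, Finset.mem_univ, true_and]
        refine ⟨Finset.notMem_erase _ _, sm_center_erase π c hc, ?_⟩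
        rw [Finset.insert_erase (sm_center_self π c)]; exact hc
    · exact ⟨A.toFinset, by simpa [SMValid] using ⟨hA1, hA2⟩⟩
    · intro A hA B hB
      simp only [Finset.mem_filter, Finset.mem_univ, true_and] at hA hB
      rw [Finset.card_le_one]
      intro x hx y hy
      rw [Finset.mem_sdiff] at hx hy
      exact sm_valid_card π A B hA hB x y hx.1 hx.2 hy.1 hy.2
    · intro A hA B hB
      simp only [Finset.mem_filter, Finset.mem_univ, true_and] at hA hB ⊢
      exact sm_valid_union π A B hA hB
  · have : ∀ A, ¬ SMValid π A := fun A hA => hs ⟨(A : Set (Fin n)), by simpa [SMValid] using hA⟩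
    have h2 : ∀ c, ¬ SMCenter π c := fun c => this _
    simp [this, h2]

/-- slots -/
lemma sm_slot_exists {n : ℕ} (π : Equiv.Perm (Fin n)) (A : Finset (Fin n)) (hA : SMValid π A) :
    ∃ p v : ℕ, p ≤ n ∧ v ≤ n ∧ SMQ π p v = A := by
  classical
  let R : ℕ → ℕ → Prop := fun p v => ∀ x : Fin n, (x : ℕ) < p →
    ((x ∈ A → (π x : ℕ) < v) ∧ (x ∉ A → v ≤ (π x : ℕ)))
  have hP0 : ∃ p, p ≤ n ∧ ∃ v, v ≤ n ∧ R p v := ⟨0, by omega, 0, by omega, fun x hx => by omega⟩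
  let p := Nat.findGreatest (fun p => ∃ v, v ≤ n ∧ R p v) n
  have hp : ∃ v, v ≤ n ∧ R p v := by
    have := Nat.findGreatest_spec (P := fun p => ∃ v, v ≤ n ∧ R p v) (Nat.zero_le n)
      ⟨0, by omega, fun x hx => by omega⟩
    exact this
  have hpn : p ≤ n := Nat.findGreatest_le n
  have hmax : p < n → ∀ v, v ≤ n → ¬ R (p+1) v := by
    intro h v hv hR
    have := Nat.findGreatest_is_greatest (P := fun p => ∃ v, v ≤ n ∧ R p v)
      (n := n) (k := p+1) (Nat.lt_succ_self p) h
    exact this ⟨v, hv, hR⟩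
  suffices hsuff : ∃ v, v ≤ n ∧ R p v ∧ ∀ x : Fin n, p ≤ (x : ℕ) →
      ((x ∈ A → v ≤ (π x : ℕ)) ∧ (x ∉ A → (π x : ℕ) < v)) by
    obtain ⟨v, hv, h1, h2⟩ := hsuff
    refine ⟨p, v, hpn, hv, ?_⟩
    ext x
    rw [mem_SMQ]
    have h1 := h1 x
    have h2 := h2 x
    by_cases hx : x ∈ A <;> simp only [hx, not_true, not_false_iff, true_imp_iff, false_imp_iff, and_true, true_and, iff_true, iff_false] at * <;> omega
  rcases hpn.lt_or_eq with hlt | heq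
  swap
  · obtain ⟨v, hv, hR⟩ := hp
    exact ⟨v, hv, hR, fun x hx => by have := x.2; omega⟩
  have hstep : ∀ v, v ≤ n → R p v → ((⟨p, hlt⟩ : Fin n) ∈ A → (π ⟨p, hlt⟩ : ℕ) < v) →
      ((⟨p, hlt⟩ : Fin n) ∉ A → v ≤ (π ⟨p, hlt⟩ : ℕ)) → False := by
    intro v hv hR ha hb
    refine hmax hlt v hv (fun x hx => ?_)
    rcases Nat.lt_succ_iff_lt_or_eq.1 hx with h | h
    · exact hR x h
    · have : x = ⟨p, hlt⟩ := Fin.ext h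
      rw [this]; exact ⟨ha, hb⟩
  by_cases hpA : (⟨p, hlt⟩ : Fin n) ∈ A
  · -- choose v maximal
    obtain ⟨v0, hv0, hR0⟩ := hp
    let v := Nat.findGreatest (fun v => R p v) n
    have hR : R p v := Nat.findGreatest_spec (P := fun v => R p v) hv0 hR0
    have hvn : v ≤ n := Nat.findGreatest_le n
    have hpv : v ≤ (π ⟨p, hlt⟩ : ℕ) := by
      by_contra hcon
      exact hstep v hvn hR (fun _ => by omega) (fun h => absurd hpA h)
    have hvlt : v < n := lt_of_le_of_lt hpv (π ⟨p, hlt⟩).2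
    have hnot : ¬ R p (v+1) := Nat.findGreatest_is_greatest (P := fun v => R p v)
      (n := n) (k := v+1) (Nat.lt_succ_self v) hvlt
    have hy : ∃ y : Fin n, (y : ℕ) < p ∧ y ∉ A ∧ (π y : ℕ) = v := by
      by_contra hcon
      push Not at hcon
      apply hnot
      intro x hx
      refine ⟨fun h => ?_, fun h => ?_⟩
      · have := (hR x hx).1 h; omega
      · have := (hR x hx).2 h
        have := hcon x hx h
        omega
    obtain ⟨y, hyp, hyA, hyv⟩ := hy
    refine ⟨v, hvn, hR, fun x hx => ⟨fun hxA => ?_, fun hxA => ?_⟩⟩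
    · rcases hx.lt_or_eq with h | h
      · have := hA.1 _ hpA x hxA h
        rw [Fin.lt_def] at this; omega
      · have : x = ⟨p, hlt⟩ := Fin.ext h.symm
        rw [this]; exact hpv
    · have := hA.2 y hyA x hxA (by rw [Fin.lt_def]; omega)
      rw [Fin.lt_def] at this; omega
  · -- choose v minimal
    have hex : ∃ v, R p v := by
      obtain ⟨v, _, h⟩ := hp
      exact ⟨v, h⟩
    let v := Nat.find hex
    have hR : R p v := Nat.find_spec hex
    have hvn : v ≤ n := by
      obtain ⟨v0, hv0, hR0⟩ := hp
      exact (Nat.find_min' hex hR0).trans hv0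
    have hpv : (π ⟨p, hlt⟩ : ℕ) < v := by
      by_contra hcon
      exact hstep v hvn hR (fun h => absurd h hpA) (fun _ => by omega)
    have hnot : ¬ R p (v-1) := Nat.find_min hex (show v - 1 < v by omega)
    have hy : ∃ y : Fin n, (y : ℕ) < p ∧ y ∈ A ∧ (π y : ℕ) = v - 1 := by
      by_contra hcon
      push Not at hcon
      apply hnot
      intro x hx
      refine ⟨fun h => ?_, fun h => ?_⟩
      · have := (hR x hx).1 h
        have := hcon x hx h
        omega
      · have := (hR x hx).2 h; omega
    obtain ⟨y, hyp, hyA, hyv⟩ := hy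
    refine ⟨v, hvn, hR, fun x hx => ⟨fun hxA => ?_, fun hxA => ?_⟩⟩
    · have := hA.1 y hyA x hxA (by rw [Fin.lt_def]; omega)
      rw [Fin.lt_def] at this; omega
    · rcases hx.lt_or_eq with h | h
      · have := hA.2 _ hpA x hxA h
        rw [Fin.lt_def] at this; omega
      · have : x = ⟨p, hlt⟩ := Fin.ext h.symm
        rw [this]; exact hpv

lemma sm_slot_uniq {n : ℕ} (π : Equiv.Perm (Fin n)) (p v v' : ℕ) (hlt : v < v') (hv' : v' ≤ n)
    (h : SMQ π p v = SMQ π p v') : False := by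
  have h1 := mem_SMQ π p v (π.symm ⟨v, by omega⟩)
  have h2 := mem_SMQ π p v' (π.symm ⟨v, by omega⟩)
  rw [h, h2] at h1
  simp at h1
  by_cases h3 : ((π.symm ⟨v, by omega⟩ : Fin n) : ℕ) < p <;> simp [h3] at h1 <;> omega

lemma sm_slot_edge {n : ℕ} (π : Equiv.Perm (Fin n)) (A : Finset (Fin n)) (hA : SMValid π A)
    (p v p' v' : ℕ) (h1 : SMQ π p v = A) (h2 : SMQ π p' v' = A) (x : Fin n) (hx : p ≤ x)
    (hx' : x < p') : SMQ π x (π x) = A ∨ (SMQ π x (π x)).erase x = A := by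
  have m1 : ∀ y : Fin n, y ∈ A ↔ ((y : ℕ) < p ↔ (π y : ℕ) < v) := fun y => by
    rw [← h1, mem_SMQ]
  have m2 : ∀ y : Fin n, y ∈ A ↔ ((y : ℕ) < p' ↔ (π y : ℕ) < v') := fun y => by
    rw [← h2, mem_SMQ]
  by_cases hxA : x ∈ A
  · left
    ext y
    rw [mem_SMQ]
    rcases eq_or_ne y x with rfl | hne
    · simp [hxA]
    have hp : π y ≠ π x := fun h => hne (π.injective h)
    have a1 := m1 y
    have a2 := m2 y
    have b1 := m1 x
    have b2 := m2 x
    have c1 := hA.1 x hxA y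
    have c2 := fun h => hA.1 y h x hxA
    simp only [Fin.lt_def, ne_eq, Fin.ext_iff] at *
    by_cases hy : y ∈ A <;> simp only [hy, hxA, true_iff, false_iff, iff_true, iff_false, true_imp_iff, false_imp_iff] at * <;> omega
  · right
    ext y
    rw [Finset.mem_erase, mem_SMQ]
    rcases eq_or_ne y x with rfl | hne
    · simp [hxA]
    have hp : π y ≠ π x := fun h => hne (π.injective h)
    have a1 := m1 y
    have a2 := m2 y
    have b1 := m1 x
    have b2 := m2 x
    have c1 := hA.2 x hxA y
    have c2 := fun h => hA.2 y h x hxA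
    simp only [Fin.lt_def, ne_eq, Fin.ext_iff] at *
    by_cases hy : y ∈ A <;> simp only [hy, hxA, true_iff, false_iff, iff_true, iff_false, true_imp_iff, false_imp_iff, not_true, not_false_iff] at * <;> omega

lemma sm_edge_slot {n : ℕ} (π : Equiv.Perm (Fin n)) (A : Finset (Fin n)) (x : Fin n) 
    (h : SMQ π x (π x) = A ∨ (SMQ π x (π x)).erase x = A) :
    ∃ v v' : ℕ, v ≤ n ∧ v' ≤ n ∧ SMQ π x v = A ∧ SMQ π (x+1) v' = A := by
  have hn := (π x).2
  rcases h with h | h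
  · refine ⟨π x, π x + 1, by omega, by omega, h, ?_⟩
    rw [← h]
    ext y
    rw [mem_SMQ, mem_SMQ]
    rcases eq_or_ne y x with rfl | hne
    · simp
    have hp : π y ≠ π x := fun h => hne (π.injective h)
    simp only [ne_eq, Fin.ext_iff] at *
    omega
  · refine ⟨π x + 1, π x, by omega, by omega, ?_, ?_⟩ <;>
    · rw [← h]
      ext y
      rw [Finset.mem_erase, mem_SMQ, mem_SMQ]
      rcases eq_or_ne y x with rfl | hne
      · simp
      have hp : π y ≠ π x := fun h => hne (π.injective h)
      simp only [ne_eq, Fin.ext_iff] at *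
      omega

open Classical in
lemma sm_count_slots {n : ℕ} (π : Equiv.Perm (Fin n)) (A : Finset (Fin n)) (hA : SMValid π A) :
    (Finset.univ.filter (fun q : Fin (n+1) × Fin (n+1) => SMQ π q.1 q.2 = A)).card =
    1 + (Finset.univ.filter (fun x : Fin n =>
      SMQ π x (π x) = A ∨ (SMQ π x (π x)).erase x = A)).card := by
  set Z := Finset.univ.filter (fun q : Fin (n+1) × Fin (n+1) => SMQ π q.1 q.2 = A) with hZ
  have memZ : ∀ p : Fin (n+1), p ∈ Z.image Prod.fst ↔ ∃ v, v ≤ n ∧ SMQ π p v = A := by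
    intro p
    simp only [hZ, Finset.mem_image, Finset.mem_filter, Finset.mem_univ, true_and]
    constructor
    · rintro ⟨⟨p', v⟩, h, rfl⟩
      exact ⟨v, by omega, h⟩
    · rintro ⟨v, hv, h⟩
      exact ⟨(p, ⟨v, by omega⟩), h, rfl⟩
  have hinj : (Z.image Prod.fst).card = Z.card := by
    apply Finset.card_image_of_injOn
    rintro ⟨p, v⟩ h ⟨p', v'⟩ h' he
    simp only [hZ, Finset.coe_filter, Finset.mem_univ, true_and, Set.mem_ofPred_eq] at h h' he
    subst he
    rcases lt_trichotomy (v : ℕ) v' with hl | hl | hl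
    · exact (sm_slot_uniq π p v v' hl (by omega) (h.trans h'.symm)).elim
    · rw [Fin.ext hl]
    · exact (sm_slot_uniq π p v' v hl (by omega) (h'.trans h.symm)).elim
  have hedge : ∀ x : Fin n, (SMQ π x (π x) = A ∨ (SMQ π x (π x)).erase x = A) →
      x.castSucc ∈ Z.image Prod.fst ∧ x.succ ∈ Z.image Prod.fst := by
    intro x hx
    obtain ⟨v, v', hv, hv', e1, e2⟩ := sm_edge_slot π A x hx
    exact ⟨(memZ _).2 ⟨v, hv, e1⟩, (memZ _).2 ⟨v', hv', by simpa using e2⟩⟩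
  have hedge2 : ∀ p ∈ Z.image Prod.fst, ∀ q ∈ Z.image Prod.fst, ∀ x : Fin n, p ≤ x.castSucc →
      x.castSucc < q → (SMQ π x (π x) = A ∨ (SMQ π x (π x)).erase x = A) := by
    intro p hp q hq x h1 h2
    obtain ⟨v, hv, e1⟩ := (memZ _).1 hp
    obtain ⟨v', hv', e2⟩ := (memZ _).1 hq
    exact sm_slot_edge π A hA p v q v' e1 e2 x h1 h2
  rw [← hinj, sm_convex n (Z.image Prod.fst)]
  · congr 2
    ext x
    simp only [Finset.mem_filter, Finset.mem_univ, true_and]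
    exact ⟨fun h => hedge2 _ h.1 _ h.2 x le_rfl (by simp), hedge x⟩
  · obtain ⟨p, v, hp, hv, h⟩ := sm_slot_exists π A hA
    exact ⟨⟨p, by omega⟩, (memZ _).2 ⟨v, hv, h⟩⟩
  · intro p hp q hq x h1 h2
    exact hedge x (hedge2 p hp q hq x h1 h2)

lemma sm_center_of {n : ℕ} (π : Equiv.Perm (Fin n)) (c : Fin n)
    (h1 : ∀ i ∈ (SMQ π c (π c)).erase c, ∀ j ∈ (SMQ π c (π c)).erase c, i < j → π i < π j)
    (h2 : ∀ i ∉ SMQ π c (π c), ∀ j ∉ SMQ π c (π c), i < j → π j < π i) : SMCenter π c := by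
  constructor
  · intro i hi j hj hij
    have hp : π i ≠ π j := fun h => hij.ne (π.injective h)
    by_cases hic : i = c
    · subst hic
      rw [mem_SMQ] at hj
      simp only [Fin.lt_def, ne_eq, Fin.ext_iff] at *; omega
    · by_cases hjc : j = c
      · subst hjc
        rw [mem_SMQ] at hi
        simp only [Fin.lt_def, ne_eq, Fin.ext_iff] at *; omega
      · exact h1 i (by simp [hic, hi]) j (by simp [hjc, hj]) hij
  · exact h2

lemma sm_center_of_erase {n : ℕ} (π : Equiv.Perm (Fin n)) (c : Fin n)
    (h : SMValid π ((SMQ π c (π c)).erase c)) : SMCenter π c := by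
  refine sm_center_of π c h.1 (fun i hi j hj hij => ?_)
  exact h.2 i (fun h => hi (Finset.mem_of_mem_erase h)) j (fun h => hj (Finset.mem_of_mem_erase h)) hij

open Classical in
lemma sm_count_two {n : ℕ} (π : Equiv.Perm (Fin n)) (x : Fin n) :
    (Finset.univ.filter (fun A => SMValid π A ∧
      (SMQ π x (π x) = A ∨ (SMQ π x (π x)).erase x = A))).card = if SMCenter π x then 2 else 0 := by
  split_ifs with h
  · have : Finset.univ.filter (fun A => SMValid π A ∧
      (SMQ π x (π x) = A ∨ (SMQ π x (π x)).erase x = A)) =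
        {SMQ π x (π x), (SMQ π x (π x)).erase x} := by
      ext A
      simp only [Finset.mem_filter, Finset.mem_univ, true_and, Finset.mem_insert,
        Finset.mem_singleton]
      constructor
      · rintro ⟨_, rfl | rfl⟩ <;> simp
      · rintro (rfl | rfl)
        · exact ⟨h, Or.inl rfl⟩
        · exact ⟨sm_center_erase π x h, Or.inr rfl⟩
    rw [this, Finset.card_pair]
    intro he
    have := sm_center_self π x
    rw [he] at this
    exact Finset.notMem_erase _ _ this
  · rw [Finset.card_eq_zero, Finset.filter_eq_empty_iff]
    rintro A - ⟨hA, rfl | rfl⟩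
    · exact h hA
    · exact h (sm_center_of_erase π x hA)

open Classical in
/-- number of centers -/
noncomputable def SME (n : ℕ) : ℕ :=
  (Finset.univ.filter (fun q : Equiv.Perm (Fin n) × Fin n => SMCenter q.1 q.2)).card

open Classical in
/-- number of valid pairs -/
noncomputable def SMT (n : ℕ) : ℕ :=
  (Finset.univ.filter (fun q : Equiv.Perm (Fin n) × Finset (Fin n) => SMValid q.1 q.2)).card

/-- card of filter on a product -/
lemma sm_card_prod {α β : Type*} [Fintype α] [Fintype β] (P : α → β → Prop)
    [DecidablePred (fun q : α × β => P q.1 q.2)] [∀ a, DecidablePred (P a)] :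
    (Finset.univ.filter (fun q : α × β => P q.1 q.2)).card =
      ∑ a, (Finset.univ.filter (P a)).card := by
  simp only [Finset.card_filter, Fintype.sum_prod_type]

open Classical in
lemma sm_first (n : ℕ) : Nat.card {π : Equiv.Perm (Fin n) // SkewMerged π} + SME n = SMT n := by
  rw [SME, SMT, sm_card_prod (fun (π : Equiv.Perm (Fin n)) c => SMCenter π c),
    sm_card_prod (fun (π : Equiv.Perm (Fin n)) A => SMValid π A), Nat.card_eq_fintype_card,
    Fintype.card_subtype, Finset.card_filter, ← Finset.sum_add_distrib]
  exact Finset.sum_congr rfl fun π _ => (sm_count_valid π).symm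

/-- insert -/
def SMins {n : ℕ} (q : Equiv.Perm (Fin n) × Fin (n+1) × Fin (n+1)) :
    Equiv.Perm (Fin (n+1)) × Fin (n+1) :=
  (((finSuccEquiv' q.2.1).trans (Equiv.optionCongr q.1)).trans (finSuccEquiv' q.2.2).symm, q.2.1)

lemma SMins_self {n : ℕ} (π : Equiv.Perm (Fin n)) (p v : Fin (n+1)) :
    (SMins (π, p, v)).1 p = v := by
  simp [SMins]

lemma SMins_above {n : ℕ} (π : Equiv.Perm (Fin n)) (p v : Fin (n+1)) (x : Fin n) :
    (SMins (π, p, v)).1 (p.succAbove x) = v.succAbove (π x) := by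
  simp [SMins]

lemma SMins_bij {n : ℕ} : Function.Bijective (SMins (n := n)) := by
  rw [Fintype.bijective_iff_injective_and_card]
  constructor
  · rintro ⟨π, p, v⟩ ⟨π', p', v'⟩ h
    have hp : p = p' := congrArg Prod.snd h
    subst hp
    have hv : v = v' := by rw [← SMins_self π p v, h, SMins_self]
    subst hv
    have : π = π' := by
      ext x
      have := SMins_above π p v x
      rw [h, SMins_above] at this
      rw [Fin.succAbove_right_injective this]
    rw [this]
  · simp [Fintype.card_perm, Nat.factorial_succ]
    ring

lemma SMins_center {n : ℕ} (π : Equiv.Perm (Fin n)) (p v : Fin (n+1)) :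
    SMCenter (SMins (π, p, v)).1 p ↔ SMValid π (SMQ π p v) := by
  have mem : ∀ x : Fin n, p.succAbove x ∈ SMQ (SMins (π, p, v)).1 p ((SMins (π, p, v)).1 p) ↔
      x ∈ SMQ π p v := by
    intro x
    rw [mem_SMQ, mem_SMQ, SMins_self, SMins_above, ← Fin.lt_def, ← Fin.lt_def,
      Fin.succAbove_lt_iff_castSucc_lt, Fin.succAbove_lt_iff_castSucc_lt]
    rfl
  constructor
  · rintro ⟨h1, h2⟩
    constructor
    · intro i hi j hj hij
      have := h1 _ ((mem i).2 hi) _ ((mem j).2 hj) (by simpa using hij)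
      simpa [SMins_above] using this
    · intro i hi j hj hij
      have := h2 _ (mt (mem i).1 hi) _ (mt (mem j).1 hj) (by simpa using hij)
      simpa [SMins_above] using this
  · rintro ⟨h1, h2⟩
    apply sm_center_of
    · intro i hi j hj hij
      rw [Finset.mem_erase] at hi hj
      obtain ⟨i, rfl⟩ := Fin.exists_succAbove_eq hi.1
      obtain ⟨j, rfl⟩ := Fin.exists_succAbove_eq hj.1
      have := h1 _ ((mem i).1 hi.2) _ ((mem j).1 hj.2) (by simpa using hij)
      simpa [SMins_above] using this
    · intro i hi j hj hij
      have hip : i ≠ p := fun h => hi (h ▸ sm_center_self _ _)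
      have hjp : j ≠ p := fun h => hj (h ▸ sm_center_self _ _)
      obtain ⟨i, rfl⟩ := Fin.exists_succAbove_eq hip
      obtain ⟨j, rfl⟩ := Fin.exists_succAbove_eq hjp
      have := h2 _ (mt (mem i).2 hi) _ (mt (mem j).2 hj) (by simpa using hij)
      simpa [SMins_above] using this

open Classical in
lemma sm_second (n : ℕ) : SME (n+1) = SMT n + 2 * SME n := by
  have e1 : SME (n+1) = (Finset.univ.filter
      (fun q : Equiv.Perm (Fin n) × (Fin (n+1) × Fin (n+1)) =>
        SMValid q.1 (SMQ q.1 q.2.1 q.2.2))).card := by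
    symm
    refine Finset.card_bij (fun q _ => SMins q) ?_ ?_ ?_
    · rintro ⟨π, p, v⟩ h
      simp only [Finset.mem_filter, Finset.mem_univ, true_and] at h ⊢
      exact (SMins_center π p v).2 h
    · intro a _ b _ h
      exact SMins_bij.1 h
    · intro b hb
      obtain ⟨⟨π, p, v⟩, rfl⟩ := SMins_bij.2 b
      simp only [Finset.mem_filter, Finset.mem_univ, true_and] at hb
      exact ⟨(π, p, v), by simpa using (SMins_center π p v).1 hb, rfl⟩
  rw [e1, SME, SMT, sm_card_prod (fun (π : Equiv.Perm (Fin n)) c => SMCenter π c),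
    sm_card_prod (fun (π : Equiv.Perm (Fin n)) A => SMValid π A),
    sm_card_prod (fun (π : Equiv.Perm (Fin n)) (q : Fin (n+1) × Fin (n+1)) =>
      SMValid π (SMQ π q.1 q.2)), Finset.mul_sum, ← Finset.sum_add_distrib]
  refine Finset.sum_congr rfl fun π _ => ?_
  rw [Finset.card_eq_sum_card_fiberwise (t := Finset.univ.filter (SMValid π))
    (f := fun q : Fin (n+1) × Fin (n+1) => SMQ π q.1 q.2)]
  swap
  · intro q hq
    simpa using hq
  have e2 : ∀ A ∈ Finset.univ.filter (SMValid π),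
      (Finset.filter (fun q : Fin (n+1) × Fin (n+1) => SMQ π q.1 q.2 = A)
        (Finset.univ.filter (fun q : Fin (n+1) × Fin (n+1) => SMValid π (SMQ π q.1 q.2)))).card =
      1 + (Finset.univ.filter (fun x : Fin n =>
      SMQ π x (π x) = A ∨ (SMQ π x (π x)).erase x = A)).card := by
    intro A hA
    simp only [Finset.mem_filter, Finset.mem_univ, true_and] at hA
    rw [← sm_count_slots π A hA]
    congr 1
    ext q
    simp only [Finset.mem_filter, Finset.mem_univ, true_and]
    constructor
    · exact fun h => h.2
    · exact fun h => ⟨h ▸ hA, h⟩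
  rw [Finset.sum_congr rfl e2, Finset.sum_add_distrib]
  congr 1
  · simp
  · simp only [Finset.card_filter _ (Finset.univ : Finset (Fin n))]
    rw [Finset.sum_comm, Finset.mul_sum]
    refine Finset.sum_congr rfl fun x _ => ?_
    rw [← Finset.card_filter, Finset.filter_filter, sm_count_two]
    split_ifs <;> rfl

lemma sm_mono_unique {n : ℕ} (π σ : Equiv.Perm (Fin n)) (A : Finset (Fin n))
    (hπ : ∀ i ∈ A, ∀ j ∈ A, i < j → π i < π j) (hσ : ∀ i ∈ A, ∀ j ∈ A, i < j → σ i < σ j)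
    (h : A.image π = A.image σ) (x : Fin n) (hx : x ∈ A) : π x = σ x := by
  have hc : (A.image π).card = A.card := Finset.card_image_of_injective _ π.injective
  have e1 := Finset.orderEmbOfFin_unique hc (f := fun i => π (A.orderEmbOfFin rfl i))
    (fun i => Finset.mem_image_of_mem _ (Finset.orderEmbOfFin_mem _ _ _))
    (fun i j hij => hπ _ (Finset.orderEmbOfFin_mem _ _ _) _ (Finset.orderEmbOfFin_mem _ _ _)
      (by simpa using hij))
  have e2 := Finset.orderEmbOfFin_unique hc (f := fun i => σ (A.orderEmbOfFin rfl i))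
    (fun i => h ▸ Finset.mem_image_of_mem _ (Finset.orderEmbOfFin_mem _ _ _))
    (fun i j hij => hσ _ (Finset.orderEmbOfFin_mem _ _ _) _ (Finset.orderEmbOfFin_mem _ _ _)
      (by simpa using hij))
  have hr : x ∈ Set.range (A.orderEmbOfFin rfl) := by simpa using hx
  obtain ⟨i, rfl⟩ := hr
  exact congrFun (e1.trans e2.symm) i

lemma sm_valid_unique {n : ℕ} (π σ : Equiv.Perm (Fin n)) (A : Finset (Fin n))
    (hπ : SMValid π A) (hσ : SMValid σ A) (h : A.image π = A.image σ) : π = σ := by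
  ext x
  by_cases hx : x ∈ A
  · rw [sm_mono_unique π σ A hπ.1 hσ.1 h x hx]
  · have h' : Aᶜ.image (π.trans Fin.revPerm) = Aᶜ.image (σ.trans Fin.revPerm) := by
      have e : Aᶜ.image π = Aᶜ.image σ := by
        ext y
        have hm := congrArg (fun S => y ∈ S) h
        simp only [Finset.mem_image, eq_iff_iff] at hm
        simp only [Finset.mem_image, Finset.mem_compl]
        have g : ∀ τ : Equiv.Perm (Fin n), (∃ a, a ∉ A ∧ τ a = y) ↔ ¬ ∃ a ∈ A, τ a = y := by
          intro τ
          constructor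
          · rintro ⟨a, ha, rfl⟩ ⟨b, hb, hab⟩
            exact ha (τ.injective hab ▸ hb)
          · intro hn
            exact ⟨τ.symm y, fun hc => hn ⟨_, hc, by simp⟩, by simp⟩
        rw [g, g, hm]
      have := congrArg (Finset.image Fin.rev) e
      rw [Finset.image_image, Finset.image_image] at this
      exact this
    have := sm_mono_unique (π.trans Fin.revPerm) (σ.trans Fin.revPerm) Aᶜ
      (fun i hi j hj hij => by simpa using hπ.2 i (by simpa using hi) j (by simpa using hj) hij)
      (fun i hi j hj hij => by simpa using hσ.2 i (by simpa using hi) j (by simpa using hj) hij)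
      h' x (by simpa using hx)
    have := Fin.rev_injective this
    rw [this]

lemma sm_valid_exists {n : ℕ} (A B : Finset (Fin n)) (h : B.card = A.card) :
    ∃ π : Equiv.Perm (Fin n), SMValid π A ∧ A.image π = B := by
  classical
  let a1 := monoEquivOfFin {x // x ∈ A} (k := A.card) (by simp)
  let b1 := monoEquivOfFin {x // x ∈ B} (k := A.card) (by simp [h])
  let a2 := monoEquivOfFin {x // ¬ x ∈ A} (k := n - A.card) (by simp [Fintype.card_subtype_compl])
  let b2 := monoEquivOfFin {x // ¬ x ∈ B} (k := n - A.card)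
    (by simp [Fintype.card_subtype_compl, h])
  let e1 : {x // x ∈ A} ≃ {x // x ∈ B} := a1.symm.toEquiv.trans b1.toEquiv
  let e2 : {x // ¬ x ∈ A} ≃ {x // ¬ x ∈ B} :=
    (a2.symm.toEquiv.trans Fin.revPerm).trans b2.toEquiv
  let π : Equiv.Perm (Fin n) := Equiv.subtypeCongr e1 e2
  have p1 : ∀ x (hx : x ∈ A), π x = e1 ⟨x, hx⟩ := by
    intro x hx
    simp [π, Equiv.subtypeCongr, Equiv.sumCompl_symm_apply_of_pos, hx]
  have p2 : ∀ x (hx : x ∉ A), π x = e2 ⟨x, hx⟩ := by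
    intro x hx
    simp [π, Equiv.subtypeCongr, Equiv.sumCompl_symm_apply_of_neg, hx]
  refine ⟨π, ⟨?_, ?_⟩, ?_⟩
  · intro i hi j hj hij
    rw [p1 i hi, p1 j hj]
    simpa [e1] using hij
  · intro i hi j hj hij
    rw [p2 i hi, p2 j hj]
    simpa [e2] using hij
  · apply Finset.eq_of_subset_of_card_le
    · intro y hy
      obtain ⟨x, hx, rfl⟩ := Finset.mem_image.1 hy
      rw [p1 x hx]; exact (e1 ⟨x, hx⟩).2
    · rw [Finset.card_image_of_injective _ π.injective, h]

open Classical in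
lemma sm_T (n : ℕ) : SMT n = n.centralBinom := by
  have e : SMT n = ∑ A : Finset (Fin n), n.choose A.card := by
    rw [SMT, sm_card_prod (fun (π : Equiv.Perm (Fin n)) A => SMValid π A)]
    simp only [Finset.card_filter]
    rw [Finset.sum_comm]
    refine Finset.sum_congr rfl fun A _ => ?_
    rw [← Finset.card_filter]
    have : n.choose A.card = (Finset.powersetCard A.card (Finset.univ : Finset (Fin n))).card := by
      simp
    rw [this]
    refine Finset.card_bij (fun π _ => A.image π) ?_ ?_ ?_
    · intro π _
      rw [Finset.mem_powersetCard]
      exact ⟨Finset.subset_univ _, Finset.card_image_of_injective _ π.injective⟩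
    · intro π hπ σ hσ h
      simp only [Finset.mem_filter, Finset.mem_univ, true_and] at hπ hσ
      exact sm_valid_unique π σ A hπ hσ h
    · intro B hB
      obtain ⟨π, h1, h2⟩ := sm_valid_exists A B (Finset.mem_powersetCard.1 hB).2
      exact ⟨π, by simpa using h1, h2⟩
  rw [e, ← Finset.powerset_univ, Finset.sum_powerset_apply_card (fun k => n.choose k),
    Nat.centralBinom, ← Nat.sum_range_choose_sq]
  simp [sq]

/-- **Theorem (Atkinson).** The generating function of the class of skew-merged permutations
is `(1 - 3x) / ((1 - 2x) √(1 - 4x))`. -/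
theorem skewMerged_generating_function :
    ∀ x : ℝ, |x| < 1 / 4 →
      ∑' n : ℕ, (Nat.card {π : Equiv.Perm (Fin n) // SkewMerged π} : ℝ) * x ^ n =
        (1 - 3 * x) / ((1 - 2 * x) * Real.sqrt (1 - 4 * x)) := by
  intro x hx
  refine sm_final (fun n => Nat.card {π : Equiv.Perm (Fin n) // SkewMerged π}) SME ?_ ?_ ?_ x hx
  · simp [SME]
  · intro n
    rw [sm_second, sm_T]
  · intro n
    rw [sm_first, sm_T]
end

section
/- A permutation class C is griddable (i.e., contained in Grid(M) for some matrix M with entries in {0, 1, −1}) if and only if there exist a and b such that C contains neither the skew sum of a+1 copies of 12 nor the direct sum of b+1 copies of 21. -/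
/-- `σ ≤ π`: the permutation `π` contains the pattern `σ`, i.e. `π` has a subsequence
in the same relative order as `σ`. -/
def PermContains {k n : ℕ} (σ : Equiv.Perm (Fin k)) (π : Equiv.Perm (Fin n)) : Prop :=
  ∃ f : Fin k → Fin n, StrictMono f ∧ ∀ i j : Fin k, σ i < σ j ↔ π (f i) < π (f j)

/-- A permutation class: a set of permutations (of each length) closed downward
under the containment order. -/
def IsPermClass (C : ∀ n : ℕ, Set (Equiv.Perm (Fin n))) : Prop :=
  ∀ (k n : ℕ) (σ : Equiv.Perm (Fin k)) (π : Equiv.Perm (Fin n)),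
    π ∈ C n → PermContains σ π → σ ∈ C k
/-- The point `i` (with value `π i`) lies in the block of the gridding `(c, r)`
indexed by column `k` and row `l`. -/
def InBlock {n t u : ℕ} (π : Equiv.Perm (Fin n)) (c : Fin (t + 1) → ℕ) (r : Fin (u + 1) → ℕ)
    (k : Fin t) (l : Fin u) (i : Fin n) : Prop :=
  c k.castSucc ≤ (i : ℕ) ∧ (i : ℕ) < c k.succ ∧
    r l.castSucc ≤ (π i : ℕ) ∧ (π i : ℕ) < r l.succ

/-- `(c, r)` is an `M`-gridding of `π`: each block is increasing, decreasing or empty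
according to the corresponding entry of the `t × u` matrix `M` (entries in {0, 1, -1},
columns indexed by `Fin t`, rows by `Fin u`). -/
def IsGridding {n t u : ℕ} (M : Fin t → Fin u → SignType) (π : Equiv.Perm (Fin n))
    (c : Fin (t + 1) → ℕ) (r : Fin (u + 1) → ℕ) : Prop :=
  Monotone c ∧ Monotone r ∧ c 0 = 0 ∧ c (Fin.last t) = n ∧ r 0 = 0 ∧ r (Fin.last u) = n ∧
    ∀ (k : Fin t) (l : Fin u),
      (M k l = 1 → ∀ i j : Fin n,
        InBlock π c r k l i → InBlock π c r k l j → i < j → π i < π j) ∧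
      (M k l = -1 → ∀ i j : Fin n,
        InBlock π c r k l i → InBlock π c r k l j → i < j → π j < π i) ∧
      (M k l = 0 → ∀ i : Fin n, ¬ InBlock π c r k l i)

/-- `π ∈ Grid(M)`: the permutation `π` possesses an `M`-gridding. -/
def InGrid {n t u : ℕ} (M : Fin t → Fin u → SignType) (π : Equiv.Perm (Fin n)) : Prop :=
  ∃ c r, IsGridding M π c r
/-- The direct sum `π ⊕ σ` of two permutations. -/
def dsum {m n : ℕ} (π : Equiv.Perm (Fin m)) (σ : Equiv.Perm (Fin n)) :
    Equiv.Perm (Fin (m + n)) :=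
  finSumFinEquiv.symm.trans ((Equiv.sumCongr π σ).trans finSumFinEquiv)

/-- The skew sum `π ⊖ σ` of two permutations. -/
def sksum {m n : ℕ} (π : Equiv.Perm (Fin m)) (σ : Equiv.Perm (Fin n)) :
    Equiv.Perm (Fin (m + n)) :=
  finSumFinEquiv.symm.trans ((Equiv.sumCongr π σ).trans
    ((Equiv.sumComm (Fin m) (Fin n)).trans (finSumFinEquiv.trans (finCongr (Nat.add_comm n m)))))

/-- The direct sum `σ ⊕ σ ⊕ ⋯ ⊕ σ` of `k` copies of `σ`. -/
def oplusIter {m : ℕ} (σ : Equiv.Perm (Fin m)) : (k : ℕ) → Equiv.Perm (Fin (m * k))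
  | 0 => 1
  | k + 1 => (finCongr (by ring : m + m * k = m * (k + 1))).permCongr (dsum σ (oplusIter σ k))

/-- The skew sum `σ ⊖ σ ⊖ ⋯ ⊖ σ` of `k` copies of `σ`. -/
def ominusIter {m : ℕ} (σ : Equiv.Perm (Fin m)) : (k : ℕ) → Equiv.Perm (Fin (m * k))
  | 0 => 1
  | k + 1 => (finCongr (by ring : m + m * k = m * (k + 1))).permCongr (sksum σ (ominusIter σ k))

/-- The permutation `12`. -/
def p12 : Equiv.Perm (Fin 2) := 1

/-- The permutation `21`. -/
def p21 : Equiv.Perm (Fin 2) := Equiv.swap 0 1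

lemma gl_one_dim {ι : Type*} (l r : ι → ℕ) : ∀ (K : ℕ) (S : Set ι),
    (∃ T : Finset ι, T.card = K ∧ (∀ i ∈ T, i ∈ S) ∧
      ∀ i ∈ T, ∀ j ∈ T, i ≠ j → r i < l j ∨ r j < l i) ∨
    ∃ P : Finset ℕ, P.card ≤ K ∧ ∀ i ∈ S, l i ≤ r i → ∃ p ∈ P, l i ≤ p ∧ p ≤ r i := by
  classical
  intro K
  induction K with
  | zero => intro S; left; exact ⟨∅, by simp⟩
  | succ K ih =>
    intro S
    by_cases hS : ∃ i, i ∈ S ∧ l i ≤ r i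
    · have hex : ∃ q, ∃ i, i ∈ S ∧ l i ≤ r i ∧ r i = q := by
        obtain ⟨i, h1, h2⟩ := hS
        exact ⟨r i, i, h1, h2, rfl⟩
      obtain ⟨i0, h0S, h0, h0q⟩ := Nat.find_spec hex
      have hmin : ∀ i ∈ S, l i ≤ r i → r i0 ≤ r i := by
        intro i hi hl
        rw [h0q]
        exact Nat.find_min' hex ⟨i, hi, hl, rfl⟩
      rcases ih {i | i ∈ S ∧ r i0 < l i} with ⟨T, hT, hTS, hd⟩ | ⟨P, hP, hh⟩
      · left
        have hnot : i0 ∉ T := by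
          intro h
          have := (hTS _ h).2
          omega
        refine ⟨insert i0 T, by rw [Finset.card_insert_of_notMem hnot, hT], ?_, ?_⟩
        · intro i hi
          rcases Finset.mem_insert.1 hi with rfl | hi
          · exact h0S
          · exact (hTS i hi).1
        · intro i hi j hj hij
          rcases Finset.mem_insert.1 hi with hi1 | hi1
          · rcases Finset.mem_insert.1 hj with hj1 | hj1
            · exact absurd (hi1.trans hj1.symm) hij
            · rw [hi1]
              exact Or.inl (hTS j hj1).2
          · rcases Finset.mem_insert.1 hj with hj1 | hj1
            · rw [hj1]
              exact Or.inr (hTS i hi1).2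
            · exact hd i hi1 j hj1 hij
      · right
        refine ⟨insert (r i0) P, (Finset.card_insert_le _ _).trans (by omega), ?_⟩
        intro i hi hl
        by_cases h : r i0 < l i
        · obtain ⟨p, hp, h1⟩ := hh i ⟨hi, h⟩ hl
          exact ⟨p, Finset.mem_insert_of_mem hp, h1⟩
        · exact ⟨r i0, Finset.mem_insert_self _ _, by omega, hmin i hi hl⟩
    · right
      exact ⟨∅, by simp, fun i hi hl => absurd ⟨i, hi, hl⟩ hS⟩

lemma gl_rainbow {ι : Type*} [Nonempty ι] (l r : ι → ℕ) :
    ∀ (m : ℕ) (J : Finset ℕ) (T : ℕ → Finset ι), J.card = m →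
    (∀ j ∈ J, m ≤ (T j).card) →
    (∀ j ∈ J, ∀ i ∈ T j, ∀ i' ∈ T j, i ≠ i' → r i < l i' ∨ r i' < l i) →
    ∃ g : ℕ → ι, (∀ j ∈ J, g j ∈ T j) ∧
      ∀ j ∈ J, ∀ j' ∈ J, j ≠ j' → r (g j) < l (g j') ∨ r (g j') < l (g j) := by
  classical
  intro m
  induction m with
  | zero =>
    intro J T hJ _ _
    rw [Finset.card_eq_zero] at hJ
    subst hJ
    exact ⟨fun _ => Classical.arbitrary ι, by simp⟩
  | succ m ih =>
    intro J T hJ hc hd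
    have hne : J.Nonempty := by rw [← Finset.card_pos]; omega
    have hex : ∃ q, ∃ j ∈ J, ∃ i ∈ T j, r i = q := by
      obtain ⟨j, hj⟩ := hne
      have : (T j).Nonempty := by
        rw [← Finset.card_pos]
        have := hc j hj
        omega
      obtain ⟨i, hi⟩ := this
      exact ⟨r i, j, hj, i, hi, rfl⟩
    obtain ⟨j0, hj0, i0, hi0, hq⟩ := Nat.find_spec hex
    have hmin : ∀ j ∈ J, ∀ i ∈ T j, r i0 ≤ r i := by
      intro j hj i hi
      rw [hq]
      exact Nat.find_min' hex ⟨j, hj, i, hi, rfl⟩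
    obtain ⟨g, hg, hgd⟩ := ih (J.erase j0) (fun j => (T j).filter (fun i => r i0 < l i))
      (by rw [Finset.card_erase_of_mem hj0, hJ]; rfl)
      (by
        intro j hj
        have hjJ := Finset.mem_of_mem_erase hj
        have h1 := Finset.card_filter_add_card_filter_not (s := T j) (fun i => r i0 < l i)
        have h2 : ((T j).filter (fun i => ¬ r i0 < l i)).card ≤ 1 := by
          rw [Finset.card_le_one]
          intro x hx y hy
          rw [Finset.mem_filter] at hx hy
          by_contra hxy
          have := hd j hjJ x hx.1 y hy.1 hxy
          have := hmin j hjJ x hx.1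
          have := hmin j hjJ y hy.1
          omega
        have h3 := hc j hjJ
        show m ≤ ((T j).filter (fun i => r i0 < l i)).card
        omega)
      (by
        intro j hj i hi i' hi' hne
        exact hd j (Finset.mem_of_mem_erase hj) i (Finset.mem_filter.1 hi).1 i'
          (Finset.mem_filter.1 hi').1 hne)
    refine ⟨Function.update g j0 i0, ?_, ?_⟩
    · intro j hj
      by_cases h : j = j0
      · subst h; simpa using hi0
      · rw [Function.update_of_ne h]
        exact (Finset.mem_filter.1 (hg j (Finset.mem_erase.2 ⟨h, hj⟩))).1
    · intro j hj j' hj' hne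
      by_cases h : j = j0
      · subst h
        have h' : j' ≠ j := fun e => hne e.symm
        rw [Function.update_self, Function.update_of_ne h']
        exact Or.inl (Finset.mem_filter.1 (hg j' (Finset.mem_erase.2 ⟨h', hj'⟩))).2
      · by_cases h' : j' = j0
        · subst h'
          rw [Function.update_self, Function.update_of_ne h]
          exact Or.inr (Finset.mem_filter.1 (hg j (Finset.mem_erase.2 ⟨h, hj⟩))).2
        · rw [Function.update_of_ne h, Function.update_of_ne h']
          exact hgd j (Finset.mem_erase.2 ⟨h, hj⟩) j' (Finset.mem_erase.2 ⟨h', hj'⟩) hne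

lemma gl_slabs {ι : Type*} (l1 r1 l2 r2 : ι → ℕ) (h1 : ∀ i, l1 i ≤ r1 i) (h2 : ∀ i, l2 i ≤ r2 i) (K : ℕ) :
    ∀ (m x0 : ℕ),
    (∃ T : ℕ → Finset ι, (∀ j < m, (T j).card = K ∧ (∀ i ∈ T j, x0 ≤ l1 i) ∧
        ∀ i ∈ T j, ∀ i' ∈ T j, i ≠ i' → r2 i < l2 i' ∨ r2 i' < l2 i) ∧
      ∀ j j', j < j' → j' < m → ∀ i ∈ T j, ∀ i' ∈ T j', r1 i < l1 i') ∨
    ∃ P1 P2 : Finset ℕ, P1.card ≤ m ∧ P2.card ≤ m * K ∧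
      ∀ i, x0 ≤ l1 i → (∃ p ∈ P1, l1 i ≤ p ∧ p ≤ r1 i) ∨ (∃ p ∈ P2, l2 i ≤ p ∧ p ≤ r2 i) := by
  classical
  intro m
  induction m with
  | zero => intro x0; left; exact ⟨fun _ => ∅, by simp⟩
  | succ m ih =>
    intro x0
    by_cases hex : ∃ q, ∃ T : Finset ι, T.card = K ∧ (∀ i ∈ T, x0 ≤ l1 i ∧ r1 i ≤ q) ∧
        ∀ i ∈ T, ∀ i' ∈ T, i ≠ i' → r2 i < l2 i' ∨ r2 i' < l2 i
    · obtain ⟨T0, hT0, hS0, hd0⟩ := Nat.find_spec hex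
      have hmin := fun q (hq : q < Nat.find hex) => Nat.find_min hex hq
      set q := Nat.find hex with hqdef
      rcases gl_one_dim l2 r2 K {i | x0 ≤ l1 i ∧ r1 i < q} with ⟨T, hT, hS, hd⟩ | ⟨P, hP, hh⟩
      · have hq : q = 0 := by
          by_contra hq
          refine hmin (q - 1) (by omega) ⟨T, hT, ?_, hd⟩
          intro i hi
          have := hS i hi
          simp only [Set.mem_ofPred_eq] at this
          omega
        have hTe : T = ∅ := by
          rw [Finset.eq_empty_iff_forall_notMem]
          intro i hi
          have := (hS i hi).2
          omega
        have hK : K = 0 := by rw [← hT, hTe]; rfl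
        left
        refine ⟨fun _ => ∅, by simp [hK]⟩
      · rcases ih (q + 1) with ⟨T, hT, hT'⟩ | ⟨P1, P2, hP1, hP2, hh'⟩
        · left
          refine ⟨fun j => Nat.casesOn j T0 T, ?_, ?_⟩
          · intro j hj
            cases j with
            | zero => exact ⟨hT0, fun i hi => (hS0 i hi).1, hd0⟩
            | succ j =>
              obtain ⟨e1, e2, e3⟩ := hT j (by omega)
              refine ⟨e1, ?_, e3⟩
              intro i hi
              by_cases hK : T0 = ∅
              · exfalso
                rw [hK] at hT0
                have : (T j).card = 0 := by rw [e1, ← hT0]; rfl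
                rw [Finset.card_eq_zero] at this
                have hi' : i ∈ T j := hi
                rw [this] at hi'
                simp at hi'
              · obtain ⟨i1, hi1⟩ := Finset.nonempty_iff_ne_empty.2 hK
                have e4 := hS0 i1 hi1
                have e5 := h1 i1
                have e6 := e2 i hi
                omega
          · intro j j' hjj hj' i hi i' hi'
            cases j' with
            | zero => omega
            | succ j' =>
              cases j with
              | zero =>
                have h1 := (hS0 i hi).2
                have h2 := (hT j' (by omega)).2.1 i' hi'
                omega
              | succ j => exact hT' j j' (by omega) (by omega) i hi i' hi'
        · right
          refine ⟨insert q P1, P ∪ P2, (Finset.card_insert_le _ _).trans (by omega),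
            (Finset.card_union_le _ _).trans (by rw [Nat.add_mul]; omega), ?_⟩
          intro i hi
          by_cases hq : q + 1 ≤ l1 i
          · rcases hh' i hq with ⟨p, hp, h⟩ | ⟨p, hp, h⟩
            · exact Or.inl ⟨p, Finset.mem_insert_of_mem hp, h⟩
            · exact Or.inr ⟨p, Finset.mem_union_right _ hp, h⟩
          · by_cases hr : r1 i < q
            · obtain ⟨p, hp, h⟩ := hh i ⟨hi, hr⟩ (h2 i)
              exact Or.inr ⟨p, Finset.mem_union_left _ hp, h⟩
            · exact Or.inl ⟨q, Finset.mem_insert_self _ _, by omega, by omega⟩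
    · right
      rcases gl_one_dim l2 r2 K {i | x0 ≤ l1 i} with ⟨T, hT, hS, hd⟩ | ⟨P, hP, hh⟩
      · exfalso
        exact hex ⟨T.sup r1, T, hT, fun i hi => ⟨hS i hi, Finset.le_sup (f := r1) hi⟩, hd⟩
      · refine ⟨∅, P, by simp, by rw [Nat.add_mul]; omega, fun i hi => Or.inr (hh i hi (h2 i))⟩

/-- Gyarfas-Lehel type lemma. -/
lemma gl_main {ι : Type*} (l1 r1 l2 r2 : ι → ℕ) (h1 : ∀ i, l1 i ≤ r1 i) (h2 : ∀ i, l2 i ≤ r2 i) (N : ℕ) :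
    (∃ g : ℕ → ι, ∀ j j', j < j' → j' < N → r1 (g j) < l1 (g j') ∧
      (r2 (g j) < l2 (g j') ∨ r2 (g j') < l2 (g j))) ∨
    ∃ P1 P2 : Finset ℕ, P1.card ≤ N ∧ P2.card ≤ N * N ∧
      ∀ i, (∃ p ∈ P1, l1 i ≤ p ∧ p ≤ r1 i) ∨ (∃ p ∈ P2, l2 i ≤ p ∧ p ≤ r2 i) := by
  rcases isEmpty_or_nonempty ι with he | hne
  · right
    exact ⟨∅, ∅, by simp, by simp, fun i => he.elim i⟩
  rcases gl_slabs l1 r1 l2 r2 h1 h2 N N 0 with ⟨T, hT, hT'⟩ | ⟨P1, P2, a, b, h⟩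
  · left
    obtain ⟨g, hg, hgd⟩ := gl_rainbow l2 r2 N (Finset.range N) T (by simp)
      (fun j hj => (hT j (Finset.mem_range.1 hj)).1.ge)
      (fun j hj => (hT j (Finset.mem_range.1 hj)).2.2)
    refine ⟨g, fun j j' hj hj' => ⟨?_, ?_⟩⟩
    · exact hT' j j' hj hj' _ (hg j (Finset.mem_range.2 (hj.trans hj'))) _
        (hg j' (Finset.mem_range.2 hj'))
    · exact hgd j (Finset.mem_range.2 (hj.trans hj')) j' (Finset.mem_range.2 hj') hj.ne
  · right
    exact ⟨P1, P2, a, b, fun i => h i (Nat.zero_le _)⟩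

lemma gl_ramsey : ∀ (s a b : ℕ), a + b = s → ∃ N : ℕ, ∀ (A B : ℕ → ℕ → Prop) (X : Finset ℕ),
    N ≤ X.card → (∀ i ∈ X, ∀ j ∈ X, i < j → A i j ∨ B i j) →
    (∃ Y : Finset ℕ, Y ⊆ X ∧ Y.card = a ∧ ∀ i ∈ Y, ∀ j ∈ Y, i < j → A i j) ∨
    (∃ Y : Finset ℕ, Y ⊆ X ∧ Y.card = b ∧ ∀ i ∈ Y, ∀ j ∈ Y, i < j → B i j) := by
  classical
  intro s
  induction s with
  | zero =>
    intro a b h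
    refine ⟨0, fun A B X _ _ => Or.inl ⟨∅, by simp, ?_, by simp⟩⟩
    simp; omega
  | succ s ih =>
    intro a b h
    rcases Nat.eq_zero_or_pos a with rfl | ha
    · exact ⟨0, fun A B X _ _ => Or.inl ⟨∅, by simp, by simp, by simp⟩⟩
    rcases Nat.eq_zero_or_pos b with rfl | hb
    · exact ⟨0, fun A B X _ _ => Or.inr ⟨∅, by simp, by simp, by simp⟩⟩
    obtain ⟨N1, h1⟩ := ih (a - 1) b (by omega)
    obtain ⟨N2, h2⟩ := ih a (b - 1) (by omega)
    refine ⟨N1 + N2 + 1, fun A B X hX hAB => ?_⟩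
    have hne : X.Nonempty := by rw [← Finset.card_pos]; omega
    set x := X.min' hne with hx
    have hxX : x ∈ X := X.min'_mem hne
    have hlt : ∀ y ∈ X.erase x, x < y := fun y hy =>
      lt_of_le_of_ne (X.min'_le y (Finset.mem_of_mem_erase hy)) (Finset.ne_of_mem_erase hy).symm
    have hcard := Finset.card_filter_add_card_filter_not (s := X.erase x) (fun y => A x y)
    rw [Finset.card_erase_of_mem hxX] at hcard
    have sub1 : (X.erase x).filter (fun y => A x y) ⊆ X.erase x := Finset.filter_subset _ _
    have sub2 : (X.erase x).filter (fun y => ¬ A x y) ⊆ X.erase x := Finset.filter_subset _ _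
    have subX : X.erase x ⊆ X := Finset.erase_subset _ _
    have ext : ∀ (R : ℕ → ℕ → Prop) (Y : Finset ℕ) (c : ℕ), 0 < c → Y ⊆ X.erase x →
        Y.card = c - 1 → (∀ y ∈ Y, R x y) → (∀ i ∈ Y, ∀ j ∈ Y, i < j → R i j) →
        ∃ Y : Finset ℕ, Y ⊆ X ∧ Y.card = c ∧ ∀ i ∈ Y, ∀ j ∈ Y, i < j → R i j := by
      intro R Y c hc hY hYc hxR hR
      have hn : x ∉ Y := fun h => by
        have := hlt x (hY h)
        omega
      refine ⟨insert x Y, ?_, ?_, ?_⟩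
      · exact Finset.insert_subset hxX (hY.trans subX)
      · rw [Finset.card_insert_of_notMem hn]; omega
      · intro i hi j hj hij
        rcases Finset.mem_insert.1 hi with rfl | hi
        · rcases Finset.mem_insert.1 hj with e | hj
          · omega
          · exact hxR j hj
        · rcases Finset.mem_insert.1 hj with e | hj
          · have := hlt i (hY hi)
            omega
          · exact hR i hi j hj hij
    by_cases hbig : N1 ≤ ((X.erase x).filter (fun y => A x y)).card
    · rcases h1 A B _ hbig (fun i hi j hj => hAB i (subX (sub1 hi)) j (subX (sub1 hj))) with
        ⟨Y, hY, hc, hR⟩ | ⟨Y, hY, hc, hR⟩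
      · left
        exact ext A Y a ha (hY.trans sub1) hc (fun y hy => (Finset.mem_filter.1 (hY hy)).2) hR
      · right
        exact ⟨Y, hY.trans (sub1.trans subX), hc, hR⟩
    · rcases h2 A B ((X.erase x).filter (fun y => ¬ A x y)) (by omega)
        (fun i hi j hj => hAB i (subX (sub2 hi)) j (subX (sub2 hj))) with
        ⟨Y, hY, hc, hR⟩ | ⟨Y, hY, hc, hR⟩
      · left
        exact ⟨Y, hY.trans (sub2.trans subX), hc, hR⟩
      · right
        refine ext B Y b hb (hY.trans sub2) hc (fun y hy => ?_) hR
        have := Finset.mem_filter.1 (hY hy)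
        exact (hAB x hxX y (subX this.1) (hlt y this.1)).resolve_left this.2

/-! ### Values of sums -/

lemma dsum_val_lt {m n : ℕ} (π : Equiv.Perm (Fin m)) (σ : Equiv.Perm (Fin n)) (i : Fin (m + n))
    (h : (i : ℕ) < m) : (dsum π σ i : ℕ) = π ⟨i, h⟩ := by
  have : i = Fin.castAdd n ⟨i, h⟩ := by ext; simp
  have key : ∀ x : Fin m, (dsum π σ (Fin.castAdd n x) : ℕ) = π x := by
    intro x
    simp [dsum]
  conv_lhs => rw [this]
  exact key _

lemma dsum_val_ge {m n : ℕ} (π : Equiv.Perm (Fin m)) (σ : Equiv.Perm (Fin n)) (i : Fin (m + n))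
    (h : m ≤ (i : ℕ)) : (dsum π σ i : ℕ) = m + σ ⟨i - m, by omega⟩ := by
  have : i = Fin.natAdd m ⟨i - m, by omega⟩ := by ext; simp; omega
  have key : ∀ x : Fin n, (dsum π σ (Fin.natAdd m x) : ℕ) = m + σ x := by
    intro x
    simp [dsum]
  conv_lhs => rw [this]
  exact key _

lemma sksum_val_lt {m n : ℕ} (π : Equiv.Perm (Fin m)) (σ : Equiv.Perm (Fin n)) (i : Fin (m + n))
    (h : (i : ℕ) < m) : (sksum π σ i : ℕ) = n + π ⟨i, h⟩ := by
  have : i = Fin.castAdd n ⟨i, h⟩ := by ext; simp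
  have key : ∀ x : Fin m, (sksum π σ (Fin.castAdd n x) : ℕ) = n + π x := by
    intro x
    simp [sksum, Nat.add_comm]
  conv_lhs => rw [this]
  exact key _

lemma sksum_val_ge {m n : ℕ} (π : Equiv.Perm (Fin m)) (σ : Equiv.Perm (Fin n)) (i : Fin (m + n))
    (h : m ≤ (i : ℕ)) : (sksum π σ i : ℕ) = σ ⟨i - m, by omega⟩ := by
  have : i = Fin.natAdd m ⟨i - m, by omega⟩ := by ext; simp; omega
  have key : ∀ x : Fin n, (sksum π σ (Fin.natAdd m x) : ℕ) = σ x := by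
    intro x
    simp [sksum]
  conv_lhs => rw [this]
  exact key _

lemma p21_val (i : Fin 2) : (p21 i : ℕ) = 1 - i := by
  revert i; decide

lemma oplus_val : ∀ (k : ℕ) (i : Fin (2 * k)),
    (oplusIter p21 k i : ℕ) = if (i : ℕ) % 2 = 0 then (i : ℕ) + 1 else i - 1
  | 0, i => absurd i.2 (by simp)
  | k + 1, i => by
    have hi := i.2
    simp only [oplusIter, Equiv.permCongr_apply, finCongr_apply, finCongr_symm, Fin.val_cast]
    by_cases h : (i : ℕ) < 2
    · rw [dsum_val_lt _ _ _ (by simpa using h), p21_val]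
      simp only [Fin.val_cast]
      split_ifs <;> omega
    · rw [dsum_val_ge _ _ _ (by simp; omega), oplus_val k]
      simp only [Fin.val_cast]
      split_ifs <;> omega

lemma ominus_val : ∀ (k : ℕ) (i : Fin (2 * k)),
    (ominusIter p12 k i : ℕ) + 2 * ((i : ℕ) / 2) + 2 = 2 * k + (i : ℕ) % 2
  | 0, i => absurd i.2 (by simp)
  | k + 1, i => by
    have hi := i.2
    simp only [ominusIter, Equiv.permCongr_apply, finCongr_apply, finCongr_symm, Fin.val_cast]
    by_cases h : (i : ℕ) < 2
    · rw [sksum_val_lt _ _ _ (by simpa using h)]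
      simp only [Fin.val_cast, p12, Equiv.Perm.coe_one, id]
      omega
    · rw [sksum_val_ge _ _ _ (by simp; omega)]
      have := ominus_val k ⟨(i : ℕ) - 2, by omega⟩
      simp only [Fin.val_cast] at this ⊢
      omega

lemma contains_of_imp {k n : ℕ} (σ : Equiv.Perm (Fin k)) (π : Equiv.Perm (Fin n))
    (f : Fin k → Fin n) (hf : StrictMono f) (h : ∀ i j, σ i < σ j → π (f i) < π (f j)) :
    PermContains σ π := by
  refine ⟨f, hf, fun i j => ⟨h i j, fun hlt => ?_⟩⟩
  rcases lt_trichotomy (σ i) (σ j) with h1 | h1 | h1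
  · exact h1
  · have := σ.injective h1
    subst this
    exact absurd hlt (lt_irrefl _)
  · exact absurd (h j i h1) (not_lt.2 hlt.le)

lemma contains_oplus {n : ℕ} (π : Equiv.Perm (Fin n)) (k : ℕ) (s t : Fin k → Fin n)
    (h : ∀ j, s j < t j ∧ π (t j) < π (s j))
    (hlt : ∀ j j', j < j' → t j < s j' ∧ π (s j) < π (t j')) :
    PermContains (oplusIter p21 k) π := by
  refine contains_of_imp _ _ (fun i => if (i : ℕ) % 2 = 0 then s ⟨i / 2, by omega⟩
    else t ⟨i / 2, by omega⟩) ?_ ?_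
  · intro i j hij
    have hij' : (i : ℕ) < j := hij
    rcases Nat.lt_or_ge ((i : ℕ) / 2) (j / 2) with hq | hq
    · have h1 := hlt ⟨i / 2, by omega⟩ ⟨j / 2, by omega⟩ hq
      have h2 := h ⟨i / 2, by omega⟩
      have h3 := h ⟨j / 2, by omega⟩
      try dsimp only
      split_ifs <;> order
    · have he : (j : ℕ) / 2 = i / 2 := by omega
      have h3 := h ⟨i / 2, by omega⟩
      have e1 : (i : ℕ) % 2 = 0 := by omega
      have e2 : ¬ (j : ℕ) % 2 = 0 := by omega
      simp only [e1, e2, if_true, if_false, he]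
      exact h3.1
  · intro i j hij
    have hij' : (oplusIter p21 k i : ℕ) < oplusIter p21 k j := hij
    rw [oplus_val, oplus_val] at hij'
    have hle : (i : ℕ) / 2 ≤ j / 2 := by split_ifs at hij' <;> omega
    rcases Nat.lt_or_ge ((i : ℕ) / 2) (j / 2) with hq | hq
    · have h1 := hlt ⟨i / 2, by omega⟩ ⟨j / 2, by omega⟩ hq
      have h2 := h ⟨i / 2, by omega⟩
      have h3 := h ⟨j / 2, by omega⟩
      try dsimp only
      split_ifs <;> order
    · have he : (j : ℕ) / 2 = i / 2 := by omega
      have h3 := h ⟨i / 2, by omega⟩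
      have e1 : ¬ (i : ℕ) % 2 = 0 := by split_ifs at hij' <;> omega
      have e2 : (j : ℕ) % 2 = 0 := by split_ifs at hij' <;> omega
      simp only [e1, e2, if_true, if_false, he]
      exact h3.2

lemma contains_ominus {n : ℕ} (π : Equiv.Perm (Fin n)) (k : ℕ) (s t : Fin k → Fin n)
    (h : ∀ j, s j < t j ∧ π (s j) < π (t j))
    (hlt : ∀ j j', j < j' → t j < s j' ∧ π (t j') < π (s j)) :
    PermContains (ominusIter p12 k) π := by
  refine contains_of_imp _ _ (fun i => if (i : ℕ) % 2 = 0 then s ⟨i / 2, by omega⟩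
    else t ⟨i / 2, by omega⟩) ?_ ?_
  · intro i j hij
    have hij' : (i : ℕ) < j := hij
    rcases Nat.lt_or_ge ((i : ℕ) / 2) (j / 2) with hq | hq
    · have h1 := hlt ⟨i / 2, by omega⟩ ⟨j / 2, by omega⟩ hq
      have h2 := h ⟨i / 2, by omega⟩
      have h3 := h ⟨j / 2, by omega⟩
      try dsimp only
      split_ifs <;> order
    · have he : (j : ℕ) / 2 = i / 2 := by omega
      have h3 := h ⟨i / 2, by omega⟩
      have e1 : (i : ℕ) % 2 = 0 := by omega
      have e2 : ¬ (j : ℕ) % 2 = 0 := by omega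
      simp only [e1, e2, if_true, if_false, he]
      exact h3.1
  · intro i j hij
    have hij' : (ominusIter p12 k i : ℕ) < ominusIter p12 k j := hij
    have v1 := ominus_val k i
    have v2 := ominus_val k j
    have hle : (j : ℕ) / 2 ≤ i / 2 := by omega
    rcases Nat.lt_or_ge ((j : ℕ) / 2) (i / 2) with hq | hq
    · have h1 := hlt ⟨j / 2, by omega⟩ ⟨i / 2, by omega⟩ hq
      have h2 := h ⟨i / 2, by omega⟩
      have h3 := h ⟨j / 2, by omega⟩
      try dsimp only
      split_ifs <;> order
    · have he : (j : ℕ) / 2 = i / 2 := by omega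
      have h3 := h ⟨i / 2, by omega⟩
      have e1 : (i : ℕ) % 2 = 0 := by omega
      have e2 : ¬ (j : ℕ) % 2 = 0 := by omega
      simp only [e1, e2, if_true, if_false, he]
      exact h3.2

/-! ### Griddings and colourings -/

lemma cuts_count (col : ℕ → ℕ) (hcol : Monotone col) (n k x : ℕ) (hx : x < n) :
    x < ((Finset.range n).filter (fun y => col y < k)).card ↔ col x < k := by
  constructor
  · intro h
    by_contra hk
    have : (Finset.range n).filter (fun y => col y < k) ⊆ Finset.range x := by
      intro y hy
      rw [Finset.mem_filter] at hy
      rw [Finset.mem_range]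
      by_contra hxy
      have := hcol (not_lt.1 hxy)
      omega
    have := Finset.card_le_card this
    rw [Finset.card_range] at this
    omega
  · intro h
    have : Finset.range (x + 1) ⊆ (Finset.range n).filter (fun y => col y < k) := by
      intro y hy
      rw [Finset.mem_range] at hy
      rw [Finset.mem_filter, Finset.mem_range]
      have := hcol (show y ≤ x by omega)
      omega
    have := Finset.card_le_card this
    rw [Finset.card_range] at this
    omega

lemma inGrid_of_col {n t u : ℕ} (M : Fin t → Fin u → SignType) (π : Equiv.Perm (Fin n))
    (col row : ℕ → ℕ) (hcol : Monotone col) (hrow : Monotone row) (hct : ∀ x, col x < t)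
    (hru : ∀ x, row x < u)
    (h : ∀ (k : Fin t) (l : Fin u),
      (M k l = 1 → ∀ i j : Fin n, col i = k → col j = k → row (π i) = l → row (π j) = l →
        i < j → π i < π j) ∧
      (M k l = -1 → ∀ i j : Fin n, col i = k → col j = k → row (π i) = l → row (π j) = l →
        i < j → π j < π i) ∧
      (M k l = 0 → ∀ i : Fin n, ¬ (col i = k ∧ row (π i) = l))) : InGrid M π := by
  have mono : ∀ (f : ℕ → ℕ) (w : ℕ), Monotone (fun k : Fin (w + 1) =>
      ((Finset.range n).filter (fun y => f y < (k : ℕ))).card) := by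
    intro f w k k' hk
    apply Finset.card_le_card
    intro y hy
    rw [Finset.mem_filter] at hy ⊢
    have : (k : ℕ) ≤ k' := hk
    exact ⟨hy.1, by omega⟩
  have last : ∀ (f : ℕ → ℕ) (w : ℕ), (∀ x, f x < w) →
      ((Finset.range n).filter (fun y => f y < w)).card = n := by
    intro f w hf
    rw [Finset.filter_true_of_mem (fun y _ => hf y), Finset.card_range]
  have key : ∀ (k : Fin t) (l : Fin u) (i : Fin n),
      InBlock π (fun k : Fin (t + 1) => ((Finset.range n).filter (fun y => col y < (k : ℕ))).card)
        (fun k : Fin (u + 1) => ((Finset.range n).filter (fun y => row y < (k : ℕ))).card) k l i →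
      col i = k ∧ row (π i) = l := by
    intro k l i hb
    obtain ⟨h1, h2, h3, h4⟩ := hb
    rw [cuts_count col hcol n _ _ i.2] at h2
    rw [cuts_count row hrow n _ _ (π i).2] at h4
    rw [← not_lt, cuts_count col hcol n _ _ i.2] at h1
    rw [← not_lt, cuts_count row hrow n _ _ (π i).2] at h3
    simp only [Fin.val_succ, Fin.val_castSucc] at h1 h2 h3 h4
    omega
  refine ⟨_, _, mono col t, mono row u, by simp, ?_, by simp, ?_, ?_⟩
  · simpa using last col t hct
  · simpa using last row u hru
  · intro k l
    obtain ⟨h1, h2, h3⟩ := h k l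
    refine ⟨fun hM i j hi hj hij => ?_, fun hM i j hi hj hij => ?_, fun hM i hi => ?_⟩
    · exact h1 hM i j (key k l i hi).1 (key k l j hj).1 (key k l i hi).2 (key k l j hj).2 hij
    · exact h2 hM i j (key k l i hi).1 (key k l j hj).1 (key k l i hi).2 (key k l j hj).2 hij
    · exact h3 hM i (key k l i hi)

lemma col_of_cuts {n t : ℕ} (c : Fin (t + 1) → ℕ) (hc : Monotone c) (h0 : c 0 = 0)
    (hl : c (Fin.last t) = n) :
    ∃ col : Fin n → Fin t, Monotone col ∧
      ∀ x : Fin n, c (col x).castSucc ≤ x ∧ (x : ℕ) < c (col x).succ := by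
  have hex : ∀ x : Fin n, ∃ k : Fin t, c k.castSucc ≤ x ∧ (x : ℕ) < c k.succ := by
    intro x
    by_contra hno
    push Not at hno
    have : ∀ k : Fin (t + 1), c k ≤ x := by
      intro k
      induction k using Fin.induction with
      | zero => omega
      | succ k ih => exact hno k ih
    have := this (Fin.last t)
    have := x.2
    omega
  choose col h using hex
  refine ⟨col, ?_, h⟩
  intro x y hxy
  by_contra hlt
  rw [not_le] at hlt
  have h1 := (h x).1
  have h2 := (h y).2
  have h3 : c (col y).succ ≤ c (col x).castSucc := hc (by
    rw [Fin.le_def]; simp only [Fin.val_succ, Fin.val_castSucc]; exact hlt)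
  have : (x : ℕ) ≤ y := hxy
  omega

lemma exists_flat_step (t u : ℕ) (H : ℕ → ℕ) (hH : ∀ q, q ≤ t + u → H q ≤ H (q + 1))
    (hb : ∀ q, q ≤ t + u + 1 → H q < t + u) : ∃ q ≤ t + u, H q = H (q + 1) := by
  by_contra hno
  push Not at hno
  have : ∀ q, q ≤ t + u → q ≤ H q := by
    intro q
    induction q with
    | zero => intro _; omega
    | succ q ih =>
      intro hq
      have := ih (by omega)
      have := hH q (by omega)
      have := hno q (by omega)
      omega
  have h1 := this (t + u) le_rfl
  have h2 := hb (t + u) (by omega)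
  omega

lemma not_grid_oplus {t u : ℕ} (M : Fin t → Fin u → SignType) :
    ¬ InGrid M (oplusIter p21 (2 * (t + u) + 3 + 1)) := by
  rintro ⟨c, r, hc, hr, hc0, hcl, hr0, hrl, hM⟩
  obtain ⟨col, hcol, hcol'⟩ := col_of_cuts c hc hc0 hcl
  obtain ⟨row, hrow, hrow'⟩ := col_of_cuts r hr hr0 hrl
  let pt : ℕ → Fin (2 * (2 * (t + u) + 3 + 1)) := fun x => ⟨min x (2 * (2 * (t + u) + 3) + 1), by omega⟩
  have hpt : ∀ x y, x ≤ y → pt x ≤ pt y := by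
    intro x y h
    simp only [pt, Fin.le_def]
    omega
  obtain ⟨q, hq, he⟩ := exists_flat_step t u (fun q => col (pt (4 * q)) + row (pt (4 * q)))
    (by
      intro q hq
      have h1 : (col (pt (4 * q)) : ℕ) ≤ col (pt (4 * (q + 1))) := hcol (hpt _ _ (by omega))
      have h2 : (row (pt (4 * q)) : ℕ) ≤ row (pt (4 * (q + 1))) := hrow (hpt _ _ (by omega))
      try dsimp only
      omega)
    (by
      intro q hq
      have h1 := (col (pt (4 * q))).2
      have h2 := (row (pt (4 * q))).2
      try dsimp only
      omega)
  have hc1 : ∀ d, d ≤ 4 → col (pt (4 * q + d)) = col (pt (4 * q)) := by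
    intro d hd
    have h1 : (col (pt (4 * q)) : ℕ) ≤ col (pt (4 * q + d)) := hcol (hpt _ _ (by omega))
    have h2 : (col (pt (4 * q + d)) : ℕ) ≤ col (pt (4 * (q + 1))) := hcol (hpt _ _ (by omega))
    have h3 : (row (pt (4 * q)) : ℕ) ≤ row (pt (4 * (q + 1))) := hrow (hpt _ _ (by omega))
    try dsimp only at he
    ext
    omega
  have hr1 : ∀ d, d ≤ 4 → row (pt (4 * q + d)) = row (pt (4 * q)) := by
    intro d hd
    have h1 : (row (pt (4 * q)) : ℕ) ≤ row (pt (4 * q + d)) := hrow (hpt _ _ (by omega))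
    have h2 : (row (pt (4 * q + d)) : ℕ) ≤ row (pt (4 * (q + 1))) := hrow (hpt _ _ (by omega))
    have h3 : (col (pt (4 * q)) : ℕ) ≤ col (pt (4 * (q + 1))) := hcol (hpt _ _ (by omega))
    try dsimp only at he
    ext
    omega
  have hv : ∀ d d', d ≤ 3 → d' ≤ 3 → (d' = if d % 2 = 0 then d + 1 else d - 1) →
      oplusIter p21 (2 * (t + u) + 3 + 1) (pt (4 * q + d)) = pt (4 * q + d') := by
    intro d d' hd hd' hdd
    ext
    rw [oplus_val]
    simp only [pt]
    split_ifs at hdd ⊢ <;> omega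
  have hblk : ∀ d d', d ≤ 3 → d' ≤ 3 → (d' = if d % 2 = 0 then d + 1 else d - 1) →
      InBlock (oplusIter p21 (2 * (t + u) + 3 + 1)) c r (col (pt (4 * q))) (row (pt (4 * q)))
        (pt (4 * q + d)) := by
    intro d d' hd hd' hdd
    have h1 := hcol' (pt (4 * q + d))
    have h2 := hrow' (pt (4 * q + d'))
    rw [hc1 d (by omega)] at h1
    rw [hr1 d' (by omega)] at h2
    refine ⟨h1.1, h1.2, ?_, ?_⟩
    · rw [hv d d' hd hd' hdd]; exact h2.1
    · rw [hv d d' hd hd' hdd]; exact h2.2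
  obtain ⟨m1, m2, m3⟩ := hM (col (pt (4 * q))) (row (pt (4 * q)))
  have b0 := hblk 0 1 (by omega) (by omega) (by simp)
  have b1 := hblk 1 0 (by omega) (by omega) (by simp)
  have b2 := hblk 2 3 (by omega) (by omega) (by simp)
  have v0 := hv 0 1 (by omega) (by omega) (by simp)
  have v1 := hv 1 0 (by omega) (by omega) (by simp)
  have v2 := hv 2 3 (by omega) (by omega) (by simp)
  have hlt : ∀ d d', d < d' → d' ≤ 3 → pt (4 * q + d) < pt (4 * q + d') := by
    intro d d' h h'
    simp only [pt, Fin.lt_def]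
    omega
  rcases hs : M (col (pt (4 * q))) (row (pt (4 * q))) with _ | _ | _
  · exact m3 hs _ b0
  · have := m2 hs _ _ b0 b2 (hlt 0 2 (by omega) (by omega))
    rw [v0, v2] at this
    exact absurd this (not_lt.2 (hlt 1 3 (by omega) (by omega)).le)
  · have := m1 hs _ _ b0 b1 (hlt 0 1 (by omega) (by omega))
    rw [v0, v1] at this
    exact absurd this (not_lt.2 (hlt 0 1 (by omega) (by omega)).le)

lemma not_grid_ominus {t u : ℕ} (M : Fin t → Fin u → SignType) :
    ¬ InGrid M (ominusIter p12 (2 * (t + u) + 3 + 1)) := by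
  rintro ⟨c, r, hc, hr, hc0, hcl, hr0, hrl, hM⟩
  obtain ⟨col, hcol, hcol'⟩ := col_of_cuts c hc hc0 hcl
  obtain ⟨row, hrow, hrow'⟩ := col_of_cuts r hr hr0 hrl
  let pt : ℕ → Fin (2 * (2 * (t + u) + 3 + 1)) :=
    fun x => ⟨min x (2 * (2 * (t + u) + 3) + 1), by omega⟩
  let vt : ℕ → Fin (2 * (2 * (t + u) + 3 + 1)) :=
    fun x => ⟨2 * (2 * (t + u) + 3) + 1 - x, by omega⟩
  have hpt : ∀ x y, x ≤ y → pt x ≤ pt y := by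
    intro x y h
    simp only [pt, Fin.le_def]
    omega
  have hvt : ∀ x y, x ≤ y → vt y ≤ vt x := by
    intro x y h
    simp only [vt, Fin.le_def]
    omega
  obtain ⟨q, hq, he⟩ := exists_flat_step t u
    (fun q => col (pt (4 * q)) + (u - 1 - row (vt (4 * q))))
    (by
      intro q hq
      have h1 : (col (pt (4 * q)) : ℕ) ≤ col (pt (4 * (q + 1))) := hcol (hpt _ _ (by omega))
      have h2 : (row (vt (4 * (q + 1))) : ℕ) ≤ row (vt (4 * q)) := hrow (hvt _ _ (by omega))
      try dsimp only
      omega)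
    (by
      intro q hq
      have h1 := (col (pt (4 * q))).2
      have h2 := (row (vt (4 * q))).2
      try dsimp only
      omega)
  have hc1 : ∀ d, d ≤ 4 → col (pt (4 * q + d)) = col (pt (4 * q)) := by
    intro d hd
    have h1 : (col (pt (4 * q)) : ℕ) ≤ col (pt (4 * q + d)) := hcol (hpt _ _ (by omega))
    have h2 : (col (pt (4 * q + d)) : ℕ) ≤ col (pt (4 * (q + 1))) := hcol (hpt _ _ (by omega))
    have h3 : (row (vt (4 * (q + 1))) : ℕ) ≤ row (vt (4 * q)) := hrow (hvt _ _ (by omega))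
    try dsimp only at he
    ext
    omega
  have hr1 : ∀ d, d ≤ 4 → row (vt (4 * q + d)) = row (vt (4 * q)) := by
    intro d hd
    have h1 : (row (vt (4 * q + d)) : ℕ) ≤ row (vt (4 * q)) := hrow (hvt _ _ (by omega))
    have h2 : (row (vt (4 * (q + 1))) : ℕ) ≤ row (vt (4 * q + d)) := hrow (hvt _ _ (by omega))
    have h3 : (col (pt (4 * q)) : ℕ) ≤ col (pt (4 * (q + 1))) := hcol (hpt _ _ (by omega))
    have h4 := (row (vt (4 * q))).2
    try dsimp only at he
    ext
    omega
  have hv : ∀ d d', d ≤ 3 → d' ≤ 3 → (d' = if d % 2 = 0 then d + 1 else d - 1) →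
      ominusIter p12 (2 * (t + u) + 3 + 1) (pt (4 * q + d)) = vt (4 * q + d') := by
    intro d d' hd hd' hdd
    ext
    have := ominus_val _ (pt (4 * q + d))
    simp only [pt, vt] at this ⊢
    split_ifs at hdd <;> omega
  have hblk : ∀ d d', d ≤ 3 → d' ≤ 3 → (d' = if d % 2 = 0 then d + 1 else d - 1) →
      InBlock (ominusIter p12 (2 * (t + u) + 3 + 1)) c r (col (pt (4 * q))) (row (vt (4 * q)))
        (pt (4 * q + d)) := by
    intro d d' hd hd' hdd
    have h1 := hcol' (pt (4 * q + d))
    have h2 := hrow' (vt (4 * q + d'))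
    rw [hc1 d (by omega)] at h1
    rw [hr1 d' (by omega)] at h2
    refine ⟨h1.1, h1.2, ?_, ?_⟩
    · rw [hv d d' hd hd' hdd]; exact h2.1
    · rw [hv d d' hd hd' hdd]; exact h2.2
  obtain ⟨m1, m2, m3⟩ := hM (col (pt (4 * q))) (row (vt (4 * q)))
  have b0 := hblk 0 1 (by omega) (by omega) (by simp)
  have b1 := hblk 1 0 (by omega) (by omega) (by simp)
  have b2 := hblk 2 3 (by omega) (by omega) (by simp)
  have v0 := hv 0 1 (by omega) (by omega) (by simp)
  have v1 := hv 1 0 (by omega) (by omega) (by simp)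
  have v2 := hv 2 3 (by omega) (by omega) (by simp)
  have hlt : ∀ d d', d < d' → d' ≤ 3 → pt (4 * q + d) < pt (4 * q + d') := by
    intro d d' h h'
    simp only [pt, Fin.lt_def]
    omega
  rcases hs : M (col (pt (4 * q))) (row (vt (4 * q))) with _ | _ | _
  · exact m3 hs _ b0
  · have := m2 hs _ _ b0 b1 (hlt 0 1 (by omega) (by omega))
    rw [v0, v1] at this
    exact absurd this (not_lt.2 (hvt _ _ (by omega)))
  · have := m1 hs _ _ b0 b2 (hlt 0 2 (by omega) (by omega))
    rw [v0, v2] at this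
    exact absurd this (not_lt.2 (hvt _ _ (by omega)))

/-! ### From hitting sets to colourings -/

lemma col_of_hit (P : Finset ℕ) (A : ℕ) (hP : P.card ≤ A) :
    ∃ col : ℕ → ℕ, Monotone col ∧ (∀ x, col x < 2 * A + 1) ∧
      ∀ x y, x < y → (∃ p ∈ P, x ≤ p ∧ p ≤ y) → col x ≠ col y := by
  have m1 : ∀ x y, x ≤ y → P.filter (fun p => p < x) ⊆ P.filter (fun p => p < y) := by
    intro x y h p hp
    rw [Finset.mem_filter] at hp ⊢
    exact ⟨hp.1, by omega⟩
  have m2 : ∀ x y, x ≤ y → P.filter (fun p => p ≤ x) ⊆ P.filter (fun p => p ≤ y) := by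
    intro x y h p hp
    rw [Finset.mem_filter] at hp ⊢
    exact ⟨hp.1, by omega⟩
  refine ⟨fun x => (P.filter (fun p => p < x)).card + (P.filter (fun p => p ≤ x)).card, ?_, ?_, ?_⟩
  · intro x y h
    exact Nat.add_le_add (Finset.card_le_card (m1 x y h)) (Finset.card_le_card (m2 x y h))
  · intro x
    have h1 := Finset.card_filter_le P (fun p => p < x)
    have h2 := Finset.card_filter_le P (fun p => p ≤ x)
    try dsimp only
    omega
  · rintro x y hxy ⟨p, hp, h1, h2⟩
    have a1 := Finset.card_le_card (m1 x y hxy.le)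
    have a2 := Finset.card_le_card (m2 x y hxy.le)
    try dsimp only
    rcases h1.eq_or_lt with rfl | h1
    · have : (P.filter (fun p => p < x)).card < (P.filter (fun p => p < y)).card := by
        apply Finset.card_lt_card
        refine (Finset.ssubset_iff_of_subset (m1 x y hxy.le)).2 ⟨x, ?_, ?_⟩
        · simp [hp, hxy]
        · simp
      omega
    · have : (P.filter (fun p => p ≤ x)).card < (P.filter (fun p => p ≤ y)).card := by
        apply Finset.card_lt_card
        refine (Finset.ssubset_iff_of_subset (m2 x y hxy.le)).2 ⟨p, ?_, ?_⟩
        · simp [hp, h2]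
        · simp [h1]
      omega

/-- A single matrix which serves all sign patterns on a `t × u` grid. -/
lemma universal_matrix (t u : ℕ) : ∃ (t' : ℕ) (M : Fin t' → Fin u → SignType),
    ∀ (n : ℕ) (π : Equiv.Perm (Fin n)) (col row : ℕ → ℕ), Monotone col → Monotone row →
      (∀ x, col x < t) → (∀ x, row x < u) →
      (∀ k l : ℕ, (∀ i j : Fin n, col i = k → col j = k → row (π i) = l → row (π j) = l →
          i < j → π i < π j) ∨
        (∀ i j : Fin n, col i = k → col j = k → row (π i) = l → row (π j) = l →
          i < j → π j < π i)) → InGrid M π := by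
  classical
  obtain ⟨N, ⟨e⟩⟩ := Finite.exists_equiv_fin (Fin u → Bool)
  have hN : 0 < N := lt_of_le_of_lt (Nat.zero_le _) (e (fun _ => true)).2
  refine ⟨t * N, fun K l => if e.symm ⟨K % N, Nat.mod_lt _ hN⟩ l then 1 else -1, ?_⟩
  intro n π col row hcol hrow hct hru h
  let v : ℕ → Fin u → Bool := fun k l => decide
    (∀ i j : Fin n, col i = k → col j = k → row (π i) = l → row (π j) = l → i < j → π i < π j)
  have hdiv : ∀ x, (col x * N + e (v (col x))) / N = col x := by
    intro x
    rw [Nat.mul_comm, Nat.mul_add_div hN, Nat.div_eq_of_lt (e (v (col x))).2, Nat.add_zero]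
  have hmod : ∀ x, (col x * N + e (v (col x))) % N = e (v (col x)) := by
    intro x
    rw [Nat.mul_comm, Nat.mul_add_mod, Nat.mod_eq_of_lt (e (v (col x))).2]
  have hkey : ∀ (K : Fin (t * N)) (l : Fin u) (i : Fin n), col i * N + e (v (col i)) = K →
      col i = (K : ℕ) / N ∧ e.symm ⟨K % N, Nat.mod_lt _ hN⟩ l = v (K / N) l := by
    intro K l i hi
    have h1 : (K : ℕ) / N = col i := by rw [← hi, hdiv]
    have h2 : (⟨(K : ℕ) % N, Nat.mod_lt _ hN⟩ : Fin N) = e (v (col i)) := by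
      ext
      try dsimp only
      rw [← hi, hmod]
    refine ⟨h1.symm, ?_⟩
    rw [h1, h2, Equiv.symm_apply_apply]
  refine inGrid_of_col _ π (fun x => col x * N + e (v (col x))) row ?_ hrow ?_ hru ?_
  · intro x y hxy
    try dsimp only
    rcases (hcol hxy).eq_or_lt with h1 | h1
    · rw [h1]
    · have h2 := (e (v (col x))).2
      have h3 : (col x + 1) * N ≤ col y * N := Nat.mul_le_mul_right _ h1
      rw [Nat.add_mul] at h3
      omega
  · intro x
    have h2 := (e (v (col x))).2
    have h3 : (col x + 1) * N ≤ t * N := Nat.mul_le_mul_right _ (hct x)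
    rw [Nat.add_mul] at h3
    try dsimp only
    omega
  · intro K l
    refine ⟨?_, ?_, ?_⟩
    · intro hM i j hi hj hri hrj hij
      obtain ⟨a1, a2⟩ := hkey K l i hi
      obtain ⟨b1, -⟩ := hkey K l j hj
      have hv : v (K / N) l = true := by
        rw [← a2]
        by_contra hc
        rw [if_neg hc] at hM
        exact absurd hM (by decide)
      exact (of_decide_eq_true hv) i j a1 b1 hri hrj hij
    · intro hM i j hi hj hri hrj hij
      obtain ⟨a1, a2⟩ := hkey K l i hi
      obtain ⟨b1, -⟩ := hkey K l j hj
      have hv : ¬ v (K / N) l = true := by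
        rw [← a2]
        intro hc
        rw [if_pos hc] at hM
        exact absurd hM (by decide)
      have hv' := fun hh => hv (decide_eq_true hh)
      exact (h (K / N) l).resolve_left hv' i j a1 b1 hri hrj hij
    · intro hM
      exfalso
      try dsimp only at hM
      split_ifs at hM

/-- Quadruples consisting of an ascent pair and a descent pair of `π`. -/
def BadQuad {n : ℕ} (π : Equiv.Perm (Fin n)) : Type :=
  {q : (Fin n × Fin n) × (Fin n × Fin n) //
    q.1.1 < q.1.2 ∧ π q.1.1 < π q.1.2 ∧ q.2.1 < q.2.2 ∧ π q.2.2 < π q.2.1}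

lemma exists_colouring (a b : ℕ) : ∃ t u : ℕ, ∀ (n : ℕ) (π : Equiv.Perm (Fin n)),
    ¬ PermContains (ominusIter p12 (a + 1)) π → ¬ PermContains (oplusIter p21 (b + 1)) π →
    ∃ col row : ℕ → ℕ, Monotone col ∧ Monotone row ∧ (∀ x, col x < t) ∧ (∀ x, row x < u) ∧
      ∀ k l : ℕ, (∀ i j : Fin n, col i = k → col j = k → row (π i) = l → row (π j) = l →
          i < j → π i < π j) ∨
        (∀ i j : Fin n, col i = k → col j = k → row (π i) = l → row (π j) = l →
          i < j → π j < π i) := by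
  obtain ⟨N, hN⟩ := gl_ramsey _ (b + 1) (a + 1) rfl
  refine ⟨2 * N + 1, 2 * (N * N) + 1, fun n π ha hb => ?_⟩
  let l1 : BadQuad π → ℕ := fun q => min (q.1.1.1 : ℕ) (q.1.2.1 : ℕ)
  let r1 : BadQuad π → ℕ := fun q => max (q.1.1.2 : ℕ) (q.1.2.2 : ℕ)
  let l2 : BadQuad π → ℕ := fun q => min (π q.1.1.1 : ℕ) (π q.1.2.2 : ℕ)
  let r2 : BadQuad π → ℕ := fun q => max (π q.1.1.2 : ℕ) (π q.1.2.1 : ℕ)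
  have hlt1 : ∀ q, l1 q < r1 q := by
    intro q
    have : (q.1.1.1 : ℕ) < q.1.1.2 := q.2.1
    simp only [l1, r1]
    omega
  have hlt2 : ∀ q, l2 q < r2 q := by
    intro q
    have : (π q.1.1.1 : ℕ) < π q.1.1.2 := q.2.2.1
    simp only [l2, r2]
    omega
  rcases gl_main l1 r1 l2 r2 (fun q => (hlt1 q).le) (fun q => (hlt2 q).le) N with
    ⟨g, hg⟩ | ⟨P1, P2, hP1, hP2, hhit⟩
  · exfalso
    rcases hN (fun i j => r1 (g i) < l1 (g j) ∧ r2 (g i) < l2 (g j))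
      (fun i j => r1 (g i) < l1 (g j) ∧ r2 (g j) < l2 (g i)) (Finset.range N) (by simp)
      (by
        intro i _ j hj hij
        have := hg i j hij (Finset.mem_range.1 hj)
        tauto) with ⟨Y, -, hY, hR⟩ | ⟨Y, -, hY, hR⟩
    · apply hb
      refine contains_oplus π (b + 1) (fun j => (g (Y.orderEmbOfFin hY j)).1.2.1)
        (fun j => (g (Y.orderEmbOfFin hY j)).1.2.2) ?_ ?_
      · intro j
        exact (g (Y.orderEmbOfFin hY j)).2.2.2
      · intro j j' hjj
        have := hR _ (Y.orderEmbOfFin_mem hY j) _ (Y.orderEmbOfFin_mem hY j')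
          ((Y.orderEmbOfFin hY).strictMono hjj)
        simp only [l1, r1, l2, r2] at this
        simp only [Fin.lt_def]
        omega
    · apply ha
      refine contains_ominus π (a + 1) (fun j => (g (Y.orderEmbOfFin hY j)).1.1.1)
        (fun j => (g (Y.orderEmbOfFin hY j)).1.1.2) ?_ ?_
      · intro j
        exact ⟨(g (Y.orderEmbOfFin hY j)).2.1, (g (Y.orderEmbOfFin hY j)).2.2.1⟩
      · intro j j' hjj
        have := hR _ (Y.orderEmbOfFin_mem hY j) _ (Y.orderEmbOfFin_mem hY j')
          ((Y.orderEmbOfFin hY).strictMono hjj)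
        simp only [l1, r1, l2, r2] at this
        simp only [Fin.lt_def]
        omega
  · obtain ⟨col, hcm, hcb, hc⟩ := col_of_hit P1 N hP1
    obtain ⟨row, hrm, hrb, hr⟩ := col_of_hit P2 (N * N) hP2
    refine ⟨col, row, hcm, hrm, hcb, hrb, fun k l => ?_⟩
    by_contra hno
    push Not at hno
    obtain ⟨⟨s, t, hs, ht, hs', ht', hst, hst'⟩, ⟨p, q, hp, hq, hp', hq', hpq, hpq'⟩⟩ := hno
    have hst2 : π t < π s := lt_of_le_of_ne hst' (fun e => hst.ne (π.injective e).symm)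
    have hpq2 : π p < π q := lt_of_le_of_ne hpq' (fun e => hpq.ne (π.injective e))
    let Q : BadQuad π := ⟨((p, q), (s, t)), hpq, hpq2, hst, hst2⟩
    have e1 : col (l1 Q) = k := by
      rcases min_choice (p : ℕ) (s : ℕ) with h | h <;> simp only [l1, Q, h] <;> assumption
    have e2 : col (r1 Q) = k := by
      rcases max_choice (q : ℕ) (t : ℕ) with h | h <;> simp only [r1, Q, h] <;> assumption
    have e3 : row (l2 Q) = l := by
      rcases min_choice (π p : ℕ) (π t : ℕ) with h | h <;> simp only [l2, Q, h] <;> assumption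
    have e4 : row (r2 Q) = l := by
      rcases max_choice (π q : ℕ) (π s : ℕ) with h | h <;> simp only [r2, Q, h] <;> assumption
    rcases hhit Q with h | h
    · exact hc _ _ (hlt1 Q) h (e1.trans e2.symm)
    · exact hr _ _ (hlt2 Q) h (e3.trans e4.symm)

/-- **Theorem.** A permutation class is griddable if and only if it does not contain
arbitrarily long direct sums of `21` or skew sums of `12`; i.e. iff there exist `a, b`
such that it contains neither the skew sum of `a + 1` copies of `12` nor the direct sum
of `b + 1` copies of `21`. -/
theorem griddable_iff_no_long_sums (C : ∀ n : ℕ, Set (Equiv.Perm (Fin n)))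
    (hC : IsPermClass C) :
    (∃ (t u : ℕ) (M : Fin t → Fin u → SignType), ∀ n : ℕ, ∀ π ∈ C n, InGrid M π) ↔
      ∃ a b : ℕ, ominusIter p12 (a + 1) ∉ C (2 * (a + 1)) ∧
        oplusIter p21 (b + 1) ∉ C (2 * (b + 1)) := by
  constructor
  · rintro ⟨t, u, M, hM⟩
    exact ⟨2 * (t + u) + 3, 2 * (t + u) + 3, fun h => not_grid_ominus M (hM _ _ h),
      fun h => not_grid_oplus M (hM _ _ h)⟩
  · rintro ⟨a, b, ha, hb⟩
    obtain ⟨t, u, h⟩ := exists_colouring a b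
    obtain ⟨t', M, hM⟩ := universal_matrix t u
    refine ⟨t', u, M, fun n π hπ => ?_⟩
    obtain ⟨col, row, h1, h2, h3, h4, h5⟩ := h n π (fun hc => ha (hC _ _ _ _ hπ hc))
      (fun hc => hb (hC _ _ _ _ hπ hc))
    exact hM n π col row h1 h2 h3 h4 h5
end

section
/- If M is a permutation matrix (a 0/1 matrix with exactly one 1 in each row and each column), then for every permutation class C contained in Grid(M) there is a polynomial p and an integer N such that the number of permutations of length n in C equals p(n) for all n ≥ N. -/
def EvPoly (f : ℕ → ℚ) : Prop := ∃ (p : Polynomial ℚ) (N : ℕ), ∀ n : ℕ, N ≤ n → f n = p.eval (n : ℚ)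

theorem EvPoly.congr {f g : ℕ → ℚ} (hf : EvPoly f) (N : ℕ) (h : ∀ n, N ≤ n → g n = f n) : EvPoly g := by
  obtain ⟨p, M, hp⟩ := hf
  refine ⟨p, max N M, fun n hn => ?_⟩
  rw [h n (le_trans (le_max_left _ _) hn), hp n (le_trans (le_max_right _ _) hn)]

theorem EvPoly.zero : EvPoly (fun _ => 0) := ⟨0, 0, by simp⟩

theorem EvPoly.add {f g : ℕ → ℚ} (hf : EvPoly f) (hg : EvPoly g) : EvPoly (fun n => f n + g n) := by
  obtain ⟨p, M, hp⟩ := hf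
  obtain ⟨q, N, hq⟩ := hg
  refine ⟨p + q, max N M, fun n hn => ?_⟩
  beta_reduce
  rw [hp n (le_trans (le_max_right _ _) hn), hq n (le_trans (le_max_left _ _) hn)]
  simp

theorem EvPoly.sum {ι : Type*} (s : Finset ι) (f : ι → ℕ → ℚ) (hf : ∀ i ∈ s, EvPoly (f i)) :
    EvPoly (fun n => ∑ i ∈ s, f i n) := by
  classical
  induction s using Finset.induction_on with
  | empty => simpa using EvPoly.zero
  | insert a s ha ih =>
    simp only [Finset.sum_insert ha]
    exact (hf a (by simp)).add (ih fun i hi => hf i (by simp [hi]))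

theorem EvPoly.shift {f : ℕ → ℚ} (hf : EvPoly f) (m : ℕ) : EvPoly (fun n => f (n - m)) := by
  obtain ⟨p, M, hp⟩ := hf
  refine ⟨p.comp (Polynomial.X - Polynomial.C (m : ℚ)), M + m, fun n hn => ?_⟩
  beta_reduce
  rw [hp (n - m) (by omega), Nat.cast_sub (by omega)]
  simp

theorem poly_sum (p : Polynomial ℚ) : ∃ q : Polynomial ℚ, ∀ n : ℕ,
    ∑ i ∈ Finset.range n, p.eval (i : ℚ) = q.eval (n : ℚ) := by
  induction p using Polynomial.induction_on' with
  | add p q hp hq =>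
    obtain ⟨p', hp⟩ := hp
    obtain ⟨q', hq⟩ := hq
    exact ⟨p' + q', fun n => by simp [Finset.sum_add_distrib, hp, hq]⟩
  | monomial k a =>
    refine ⟨Polynomial.C (a / (k + 1)) * (Polynomial.bernoulli k.succ - Polynomial.C (bernoulli k.succ)), fun n => ?_⟩
    have h := Polynomial.sum_range_pow_eq_bernoulli_sub n k
    have hk : (k : ℚ) + 1 ≠ 0 := by positivity
    simp only [Polynomial.eval_monomial, ← Finset.mul_sum, Polynomial.eval_mul, Polynomial.eval_C,
      Polynomial.eval_sub]
    rw [← h]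
    field_simp

theorem EvPoly.cumsum {f : ℕ → ℚ} (hf : EvPoly f) :
    EvPoly (fun n => ∑ i ∈ Finset.range n, f i) := by
  obtain ⟨p, N, hp⟩ := hf
  obtain ⟨q, hq⟩ := poly_sum p
  refine ⟨q + Polynomial.C (∑ i ∈ Finset.range N, (f i - p.eval (i : ℚ))), N, fun n hn => ?_⟩
  rw [Polynomial.eval_add, ← hq, Polynomial.eval_C]
  have : ∑ i ∈ Finset.range N, (f i - p.eval (i : ℚ)) = ∑ i ∈ Finset.range n, (f i - p.eval (i : ℚ)) := by
    apply Finset.sum_subset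
    · simpa using hn
    · intro x _ hx
      rw [hp x (by simpa using hx), sub_self]
  rw [this, Finset.sum_sub_distrib]
  ring

theorem slices_stabilize {k : ℕ} (D : ℕ → Set (Fin k → ℕ)) (hD : ∀ m, IsLowerSet (D m))
    (hanti : Antitone D) : ∃ N, ∀ m, N ≤ m → D m = D N := by
  by_contra! h
  have h' : ∀ N, ∃ m, N ≤ m ∧ ∃ x, x ∈ D N ∧ x ∉ D m := by
    intro N
    obtain ⟨m, hm, hne⟩ := h N
    refine ⟨m, hm, ?_⟩
    by_contra! hc
    exact hne (Set.Subset.antisymm (hanti hm) hc)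
  choose nx hle x hx hx' using h'
  let s : ℕ → ℕ := fun i => Nat.rec 0 (fun _ y => nx y) i
  have hs : Monotone s := monotone_nat_of_le_succ fun i => hle _
  obtain ⟨i, j, hij, hxx⟩ := (wellQuasiOrdered_le (α := Fin k → ℕ)) (fun i => x (s i))
  have h1 : x (s j) ∈ D (s (i+1)) := hanti (hs hij) (hx (s j))
  exact hx' (s i) (hD _ hxx h1)

open Classical in
noncomputable def cnt {k : ℕ} (D : Set (Fin k → ℕ)) (n : ℕ) : ℕ :=
  ((Finset.Nat.antidiagonalTuple k n).filter (· ∈ D)).card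

theorem cnt_succ {k : ℕ} (D : Set (Fin (k+1) → ℕ)) (n : ℕ) :
    cnt D n = ∑ m ∈ Finset.range (n+1), cnt {a : Fin k → ℕ | (Fin.cons m a : Fin (k+1) → ℕ) ∈ D} (n - m) := by
  classical
  unfold cnt
  rw [Finset.card_eq_sum_card_fiberwise (f := fun a => a 0) (t := Finset.range (n+1))]
  · apply Finset.sum_congr rfl
    intro m hm
    symm
    apply Finset.card_bij (fun a _ => (Fin.cons m a : Fin (k+1) → ℕ))
    · intro a ha
      simp only [Finset.mem_filter, Finset.Nat.mem_antidiagonalTuple, Finset.mem_range,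
        Set.mem_ofPred_eq] at *
      refine ⟨⟨?_, ha.2⟩, by simp⟩
      rw [Fin.sum_univ_succ]; simp; omega
    · intro a _ b _ hab
      exact (Fin.cons_injective2 hab).2
    · intro b hb
      simp only [Finset.mem_filter, Finset.Nat.mem_antidiagonalTuple, Finset.mem_range,
        Set.mem_ofPred_eq] at *
      have hb' : (Fin.cons m (Fin.tail b) : Fin (k+1) → ℕ) = b := by
        rw [← hb.2]; exact Fin.cons_self_tail b
      refine ⟨Fin.tail b, ⟨?_, by rw [hb']; exact hb.1.2⟩, hb'⟩
      have := hb.1.1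
      rw [Fin.sum_univ_succ] at this
      simp only [Fin.tail]
      omega
  · intro a ha
    simp only [Finset.coe_filter, Finset.Nat.mem_antidiagonalTuple, Set.mem_ofPred_eq,
      Finset.coe_range, Set.mem_Iio] at *
    have := ha.1
    rw [Fin.sum_univ_succ] at this
    omega

theorem cnt_evPoly {k : ℕ} (D : Set (Fin k → ℕ)) (hD : IsLowerSet D) :
    EvPoly (fun n => (cnt D n : ℚ)) := by
  induction k with
  | zero =>
    refine ⟨0, 1, fun n hn => ?_⟩
    obtain ⟨n, rfl⟩ : ∃ m, n = m + 1 := ⟨n - 1, by omega⟩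
    simp [cnt]
  | succ k ih =>
    set S : ℕ → Set (Fin k → ℕ) := fun m => {a | (Fin.cons m a : Fin (k+1) → ℕ) ∈ D} with hS
    have hSl : ∀ m, IsLowerSet (S m) := by
      intro m a b hab ha
      refine hD ?_ ha
      intro i
      refine Fin.cases ?_ (fun i => ?_) i
      · simp
      · simpa using hab i
    have hSa : Antitone S := by
      intro m m' hm a ha
      refine hD ?_ ha
      intro i
      refine Fin.cases ?_ (fun i => ?_) i
      · simpa using hm
      · simp
    obtain ⟨N, hN⟩ := slices_stabilize S hSl hSa
    have e1 : EvPoly (fun n => ∑ m ∈ Finset.range N, (cnt (S m) (n - m) : ℚ)) :=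
      EvPoly.sum _ _ fun m _ => (ih (S m) (hSl m)).shift m
    have e2 : EvPoly (fun n => ∑ j ∈ Finset.range (n + 1 - N), (cnt (S N) j : ℚ)) := by
      by_cases h0 : N = 0
      · subst h0
        obtain ⟨p, M, hp⟩ := (ih (S 0) (hSl 0)).cumsum
        refine ⟨p.comp (Polynomial.X + 1), M, fun n hn => ?_⟩
        have := hp (n+1) (by omega)
        simpa using this
      · refine ((ih (S N) (hSl N)).cumsum.shift (N-1)).congr 0 fun n _ => ?_
        rw [show n + 1 - N = n - (N - 1) by omega]
    refine (e1.add e2).congr N fun n hn => ?_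
    rw [cnt_succ, Nat.cast_sum]
    rw [← Finset.sum_range_add_sum_Ico _ (show N ≤ n + 1 by omega)]
    congr 1
    rw [Finset.sum_Ico_eq_sum_range, ← Finset.sum_range_reflect]
    apply Finset.sum_congr rfl
    intro j hj
    rw [Finset.mem_range] at hj
    have : S (N + (n + 1 - N - 1 - j)) = S N := hN _ (by omega)
    have h2 : n - (N + (n + 1 - N - 1 - j)) = j := by omega
    change (cnt (S (N + (n + 1 - N - 1 - j))) (n - (N + (n + 1 - N - 1 - j))) : ℚ) = _
    rw [this, h2]

/-- `π` is the inflation of `τ` whose block structure is given by `g`. -/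
def InflRel {n k : ℕ} (π : Equiv.Perm (Fin n)) (τ : Equiv.Perm (Fin k)) (g : Fin n → Fin k) : Prop :=
  ∀ i j, π i < π j ↔ (τ (g i) < τ (g j) ∨ (g i = g j ∧ i < j))

def Reduced {k : ℕ} (τ : Equiv.Perm (Fin k)) : Prop :=
  ∀ c d : Fin k, d.val = c.val + 1 → (τ d).val ≠ (τ c).val + 1

theorem perm_ext_of_lt {n : ℕ} (π π' : Equiv.Perm (Fin n))
    (h : ∀ i j, π i < π j ↔ π' i < π' j) : π = π' := by
  have hsm : StrictMono (fun x => π' (π.symm x)) := by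
    intro x y hxy
    rw [← h]; simpa using hxy
  have hs : StrictMono (fun x => π (π'.symm x)) := by
    intro x y hxy
    rw [h]; simpa using hxy
  ext i
  have h1 : π i ≤ π' i := by simpa using hsm.id_le (π i)
  have h2 : π' i ≤ π i := by simpa using hs.id_le (π' i)
  rw [le_antisymm h1 h2]

theorem exists_stand {n : ℕ} {α : Type*} [LinearOrder α] (f : Fin n → α)
    (hf : Function.Injective f) : ∃ π : Equiv.Perm (Fin n), ∀ i j, π i < π j ↔ f i < f j := by
  have hm : StrictMono (f ∘ Tuple.sort f) :=
    (Tuple.monotone_sort f).strictMono_of_injective (hf.comp (Tuple.sort f).injective)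
  refine ⟨(Tuple.sort f).symm, fun i j => ?_⟩
  rw [← hm.lt_iff_lt]
  simp

def Dset (C : ∀ n : ℕ, Set (Equiv.Perm (Fin n))) {k : ℕ} (τ : Equiv.Perm (Fin k)) :
    Set (Fin k → ℕ) :=
  {a | ∃ n, ∃ π ∈ C n, ∃ g : Fin n → Fin k, Monotone g ∧ InflRel π τ g ∧
    ∀ c, (Finset.univ.filter fun i => g i = c).card = a c}

theorem Dset_lower {C : ∀ n : ℕ, Set (Equiv.Perm (Fin n))} (hC : IsPermClass C) {k : ℕ}
    (τ : Equiv.Perm (Fin k)) : IsLowerSet (Dset C τ) := by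
  classical
  rintro a b hba ⟨n, π, hπ, g, hg, hr, ha⟩
  have : ∀ c, ∃ T ⊆ (Finset.univ.filter fun i => g i = c), T.card = b c := fun c =>
    Finset.exists_subset_card_eq (by rw [ha]; exact hba c)
  choose T hT hTc using this
  let U := Finset.univ.biUnion T
  let f := U.orderEmbOfFin rfl
  obtain ⟨π', hπ'⟩ := exists_stand (fun i => π (f i)) (π.injective.comp f.injective)
  refine ⟨_, π', hC _ _ π' π hπ ⟨f, f.strictMono, hπ'⟩, fun i => g (f i), 
    hg.comp f.monotone, ?_, ?_⟩
  · intro i j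
    rw [hπ', hr]
    simp
  · intro c
    rw [← hTc c]
    apply Finset.card_bij (fun i _ => f i)
    · intro i hi
      simp only [Finset.mem_filter, Finset.mem_univ, true_and] at hi
      have hm : f i ∈ U := Finset.orderEmbOfFin_mem _ _ _
      simp only [U, Finset.mem_biUnion, Finset.mem_univ, true_and] at hm
      obtain ⟨d, hd⟩ := hm
      have := hT d hd
      simp only [Finset.mem_filter, Finset.mem_univ, true_and] at this
      rw [← hi, this]; exact hd
    · intro i _ j _ h
      exact f.injective h
    · intro x hx
      have hxU : x ∈ U := Finset.mem_biUnion.2 ⟨c, Finset.mem_univ _, hx⟩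
      have : x ∈ Set.range f := by
        rw [Finset.range_orderEmbOfFin]; exact hxU
      obtain ⟨i, rfl⟩ := this
      refine ⟨i, ?_, rfl⟩
      have := hT c hx
      simpa using this

theorem mono_unique {n k : ℕ} (g g' : Fin n → Fin k) (hg : Monotone g) (hg' : Monotone g')
    (h : ∀ c, (Finset.univ.filter fun i => g i = c).card
      = (Finset.univ.filter fun i => g' i = c).card) : g = g' := by
  classical
  have key : ∀ (u : Fin n → Fin k) (c : Fin k), (Finset.univ.filter fun i => u i ≤ c).card
      = ∑ d ∈ Finset.Iic c, (Finset.univ.filter fun i => u i = d).card := by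
    intro u c
    rw [Finset.card_eq_sum_card_fiberwise (f := u) (t := Finset.Iic c)]
    · apply Finset.sum_congr rfl
      intro d hd
      congr 1
      ext i
      simp only [Finset.mem_Iic] at hd
      simp only [Finset.mem_filter, Finset.mem_univ, true_and]
      constructor
      · exact fun h => h.2
      · rintro rfl; exact ⟨hd, rfl⟩
    · intro i hi
      simpa using hi
  have low : ∀ (u : Fin n → Fin k) (c : Fin k), Monotone u → IsLowerSet {i | u i ≤ c} :=
    fun u c hu i j hij hi => le_trans (hu hij) hi
  have eq : ∀ c i, g i ≤ c ↔ g' i ≤ c := by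
    intro c i
    have hc : (Finset.univ.filter fun i => g i ≤ c).card
        = (Finset.univ.filter fun i => g' i ≤ c).card := by
      rw [key, key]; exact Finset.sum_congr rfl fun d _ => h d
    have : (Finset.univ.filter fun i => g i ≤ c) = (Finset.univ.filter fun i => g' i ≤ c) := by
      rcases (low g c hg).total (low g' c hg') with hs | hs
      · apply Finset.eq_of_subset_of_card_le _ hc.ge
        intro i hi
        have := @hs i (by simpa using hi)
        simpa using this
      · symm
        apply Finset.eq_of_subset_of_card_le _ hc.le
        intro i hi
        have := @hs i (by simpa using hi)
        simpa using this
    have := congrArg (i ∈ ·) this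
    simpa using this
  funext i
  exact le_antisymm ((eq _ _).2 le_rfl) ((eq _ _).1 le_rfl)

/-- For a reduced inflation, adjacency in the same block is intrinsic. -/
theorem adj_iff {n k : ℕ} {π : Equiv.Perm (Fin n)} {τ : Equiv.Perm (Fin k)} {g : Fin n → Fin k}
    (hg : Monotone g) (hs : Function.Surjective g) (hr : InflRel π τ g) (hτ : Reduced τ)
    (i j : Fin n) (hij : j.val = i.val + 1) :
    g i = g j ↔ (π j).val = (π i).val + 1 := by
  have hlt : i < j := by rw [Fin.lt_def]; omega
  constructor
  · intro h
    have h1 : π i < π j := (hr i j).2 (Or.inr ⟨h, hlt⟩)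
    by_contra hne
    have hv : (π i).val + 1 < n := by have := (π j).isLt; rw [Fin.lt_def] at h1; omega
    obtain ⟨m, hm⟩ := π.surjective ⟨(π i).val + 1, hv⟩
    have a1 : π i < π m := by rw [hm, Fin.lt_def]; simp
    have a2 : π m < π j := by rw [hm, Fin.lt_def]; rw [Fin.lt_def] at h1; simp; omega
    rw [hr] at a1 a2
    rw [← h] at a2
    rcases a1 with a1 | ⟨a1, b1⟩ <;> rcases a2 with a2 | ⟨a2, b2⟩
    · exact absurd a1 a2.asymm
    · rw [a2] at a1; exact lt_irrefl _ a1
    · rw [a1] at a2; exact lt_irrefl _ a2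
    · rw [Fin.lt_def] at b1 b2; omega
  · intro h
    by_contra hne
    have hgl : g i < g j := lt_of_le_of_ne (hg hlt.le) hne
    have hgs : (g j).val = (g i).val + 1 := by
      by_contra hne'
      rw [Fin.lt_def] at hgl
      obtain ⟨m, hm⟩ := hs ⟨(g i).val + 1, by have := (g j).isLt; omega⟩
      have b1 : i < m := by
        by_contra hc
        have := hg (not_lt.1 hc)
        rw [hm, Fin.le_def] at this; simp at this
      have b2 : m < j := by
        by_contra hc
        have := hg (not_lt.1 hc)
        rw [hm, Fin.le_def] at this; simp at this; omega
      rw [Fin.lt_def] at b1 b2; omega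
    have hp : π i < π j := by rw [Fin.lt_def]; omega
    have ht : τ (g i) < τ (g j) := by
      rcases (hr i j).1 hp with h | h
      · exact h
      · exact absurd h.1 hne
    have hred := hτ _ _ hgs
    rw [Fin.lt_def] at ht
    obtain ⟨c, hc⟩ := τ.surjective ⟨(τ (g i)).val + 1, by have := (τ (g j)).isLt; omega⟩
    obtain ⟨m, rfl⟩ := hs c
    have a1 : π i < π m := (hr _ _).2 (Or.inl (by rw [hc, Fin.lt_def]; simp))
    have a2 : π m < π j := (hr _ _).2 (Or.inl (by rw [hc, Fin.lt_def]; simp; omega))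
    rw [Fin.lt_def] at a1 a2
    omega

theorem surj_step {n k : ℕ} {g : Fin n → Fin k} (hg : Monotone g) (hs : Function.Surjective g)
    (i j : Fin n) (hij : j.val = i.val + 1) : (g j).val ≤ (g i).val + 1 := by
  by_contra hne
  obtain ⟨m, hm⟩ := hs ⟨(g i).val + 1, by have := (g j).isLt; omega⟩
  have b1 : i < m := by
    by_contra hc
    have := hg (not_lt.1 hc)
    rw [hm, Fin.le_def] at this; simp at this
  have b2 : m < j := by
    by_contra hc
    have := hg (not_lt.1 hc)
    rw [hm, Fin.le_def] at this; simp at this; omega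
  rw [Fin.lt_def] at b1 b2; omega

theorem surj_zero {n k : ℕ} {g : Fin n → Fin k} (hg : Monotone g) (hs : Function.Surjective g)
    (i : Fin n) (hi : i.val = 0) : (g i).val = 0 := by
  obtain ⟨m, hm⟩ := hs ⟨0, by have := (g i).isLt; omega⟩
  have := hg (show i ≤ m by rw [Fin.le_def]; omega)
  rw [hm, Fin.le_def] at this
  simpa using this

theorem surj_val_unique {n k k' : ℕ} {g : Fin n → Fin k} {g' : Fin n → Fin k'}
    (hg : Monotone g) (hs : Function.Surjective g) (hg' : Monotone g') (hs' : Function.Surjective g')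
    (h : ∀ i j : Fin n, j.val = i.val + 1 → (g i = g j ↔ g' i = g' j)) (i : Fin n) :
    (g i).val = (g' i).val := by
  obtain ⟨i, hi⟩ := i
  induction i with
  | zero => rw [surj_zero hg hs _ rfl, surj_zero hg' hs' _ rfl]
  | succ i ih =>
    have ih := ih (by omega)
    have h1 := surj_step hg hs ⟨i, by omega⟩ ⟨i+1, hi⟩ rfl
    have h2 := surj_step hg' hs' ⟨i, by omega⟩ ⟨i+1, hi⟩ rfl
    have h3 := h ⟨i, by omega⟩ ⟨i+1, hi⟩ rfl
    have h4 := hg (show (⟨i, by omega⟩ : Fin n) ≤ ⟨i+1, hi⟩ by simp [Fin.le_def])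
    have h5 := hg' (show (⟨i, by omega⟩ : Fin n) ≤ ⟨i+1, hi⟩ by simp [Fin.le_def])
    rw [Fin.le_def] at h4 h5
    rw [Fin.ext_iff, Fin.ext_iff] at h3
    omega

def IsRed {n k : ℕ} (π : Equiv.Perm (Fin n)) (τ : Equiv.Perm (Fin k)) : Prop :=
  Reduced τ ∧ ∃ g : Fin n → Fin k, Monotone g ∧ Function.Surjective g ∧ InflRel π τ g

theorem isRed_k_unique {n k k' : ℕ} {π : Equiv.Perm (Fin n)} {τ : Equiv.Perm (Fin k)}
    {τ' : Equiv.Perm (Fin k')} (h : IsRed π τ) (h' : IsRed π τ') : k = k' := by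
  obtain ⟨hτ, g, hg, hs, hr⟩ := h
  obtain ⟨hτ', g', hg', hs', hr'⟩ := h'
  have hv := surj_val_unique hg hs hg' hs' (fun i j hij => by
    rw [adj_iff hg hs hr hτ i j hij, adj_iff hg' hs' hr' hτ' i j hij])
  apply le_antisymm
  · by_contra hc
    obtain ⟨m, hm⟩ := hs ⟨k', by omega⟩
    have := hv m
    rw [hm] at this
    have := (g' m).isLt
    simp at *; omega
  · by_contra hc
    obtain ⟨m, hm⟩ := hs' ⟨k, by omega⟩
    have := hv m
    rw [hm] at this
    have := (g m).isLt
    simp at *; omega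

theorem isRed_τ_unique {n k : ℕ} {π : Equiv.Perm (Fin n)} {τ : Equiv.Perm (Fin k)}
    {τ' : Equiv.Perm (Fin k)} (h : IsRed π τ) (h' : IsRed π τ') : τ = τ' := by
  obtain ⟨hτ, g, hg, hs, hr⟩ := h
  obtain ⟨hτ', g', hg', hs', hr'⟩ := h'
  have hv := surj_val_unique hg hs hg' hs' (fun i j hij => by
    rw [adj_iff hg hs hr hτ i j hij, adj_iff hg' hs' hr' hτ' i j hij])
  have : g = g' := by funext i; exact Fin.ext (hv i)
  subst this
  apply perm_ext_of_lt
  intro c d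
  obtain ⟨i, rfl⟩ := hs c
  obtain ⟨j, rfl⟩ := hs d
  by_cases hij : g i = g j
  · rw [hij]; simp
  · have h1 := hr i j
    have h2 := hr' i j
    simp only [hij, false_and, or_false] at h1 h2
    rw [← h1, h2]

/-- Number of permutations in the class with a given reduction. -/
theorem card_isRed {C : ∀ n : ℕ, Set (Equiv.Perm (Fin n))} {k : ℕ}
    (τ : Equiv.Perm (Fin k)) (hτ : Reduced τ) (n : ℕ) (hn : k ≤ n) :
    {π | π ∈ C n ∧ IsRed π τ}.ncard = cnt {a | (fun c => a c + 1) ∈ Dset C τ} (n - k) := by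
  classical
  unfold cnt
  rw [← Set.ncard_coe_finset]
  have hx : ∀ π : Equiv.Perm (Fin n), IsRed π τ → ∃ g : Fin n → Fin k, Monotone g ∧
    Function.Surjective g ∧ InflRel π τ g := fun π h => h.2
  choose G hG hGs hGr using hx
  have fib : ∀ (g : Fin n → Fin k), ∑ c, (Finset.univ.filter fun i => g i = c).card = n := by
    intro g
    rw [← Finset.card_eq_sum_card_fiberwise (by intro i _; simp)]
    simp
  have pos : ∀ (g : Fin n → Fin k) (_ : Function.Surjective g) c,
      1 ≤ (Finset.univ.filter fun i => g i = c).card := by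
    intro g hg c
    obtain ⟨i, hi⟩ := hg c
    exact Finset.card_pos.2 ⟨i, by simpa using hi⟩
  apply Set.ncard_congr (fun π h c => (Finset.univ.filter fun i => G π h.2 i = c).card - 1)
  · rintro π ⟨hπ, h⟩
    have hp := pos _ (hGs π h)
    simp only [Finset.coe_filter, Finset.Nat.mem_antidiagonalTuple, Set.mem_ofPred_eq]
    constructor
    · have h1 := fib (G π h)
      have h2 : ∑ c : Fin k, ((Finset.univ.filter fun i => G π h i = c).card - 1) + ∑ c : Fin k, 1 = n := by
        rw [← Finset.sum_add_distrib]
        conv_rhs => rw [← h1]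
        exact Finset.sum_congr rfl fun c _ => Nat.sub_add_cancel (hp c)
      simp at h2 ⊢
      omega
    · exact ⟨n, π, hπ, G π h, hG π h, hGr π h, fun c => (Nat.sub_add_cancel (hp c)).symm⟩
  · rintro π π' ⟨hπ, h⟩ ⟨hπ', h'⟩ he
    have hp := pos _ (hGs π h)
    have hp' := pos _ (hGs π' h')
    have : G π h = G π' h' := mono_unique _ _ (hG _ _) (hG _ _) fun c => by
      have e1 := congrFun he c
      have e2 := hp c
      have e3 := hp' c
      beta_reduce at e1
      omega
    apply perm_ext_of_lt
    intro i j
    rw [hGr π h, hGr π' h', this]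
  · rintro a ha
    simp only [Finset.coe_filter, Finset.Nat.mem_antidiagonalTuple, Set.mem_ofPred_eq] at ha
    obtain ⟨hsum, m, π, hπ, g, hg, hr, hc⟩ := ha
    have hm : m = n := by
      have : ∑ c, (Finset.univ.filter fun i => g i = c).card = m := by
        rw [← Finset.card_eq_sum_card_fiberwise (by intro i _; simp)]
        simp
      simp only [hc] at this
      rw [Finset.sum_add_distrib, hsum] at this
      simp at this
      omega
    subst hm
    have hs : Function.Surjective g := by
      intro c
      have : 0 < (Finset.univ.filter fun i => g i = c).card := by rw [hc]; exact Nat.succ_pos _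
      obtain ⟨i, hi⟩ := Finset.card_pos.1 this
      exact ⟨i, by simpa using hi⟩
    have h : IsRed π τ := ⟨hτ, g, hg, hs, hr⟩
    refine ⟨π, ⟨hπ, h⟩, ?_⟩
    have : G π h = g := by
      funext i
      exact Fin.ext (surj_val_unique (hG π h) (hGs π h) hg hs (fun i j hij => by
        rw [adj_iff (hG π h) (hGs π h) (hGr π h) hτ i j hij, adj_iff hg hs hr hτ i j hij]) i)
    funext c
    rw [this, hc]; simp

/-- Every permutation has a reduction. The number of blocks is bounded by any column labelling. -/
theorem exists_isRed {n t : ℕ} (π : Equiv.Perm (Fin n)) (h : Fin n → Fin t) (hm : Monotone h)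
    (hadj : ∀ i j : Fin n, j.val = i.val + 1 → h i = h j → (π j).val = (π i).val + 1) :
    ∃ k, k ≤ t ∧ ∃ τ : Equiv.Perm (Fin k), IsRed π τ := by
  classical
  rcases Nat.eq_zero_or_pos n with rfl | hn
  · refine ⟨0, Nat.zero_le _, 1, fun c => c.elim0, fun i => i.elim0, fun i => i.elim0,
      fun c => c.elim0, fun i => i.elim0⟩
  let br : ℕ → Prop := fun m => ¬ ∃ (hm : m + 1 < n), (π ⟨m+1, hm⟩).val = (π ⟨m, by omega⟩).val + 1
  let b : ℕ → ℕ := fun i => ((Finset.range i).filter br).card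
  have b0 : b 0 = 0 := by simp [b]
  have bs : ∀ i, b (i+1) = b i + if br i then 1 else 0 := by
    intro i
    simp only [b, Finset.range_add_one, Finset.filter_insert]
    split_ifs <;> simp
  have bmono : Monotone b := monotone_nat_of_le_succ fun i => by rw [bs]; omega
  have bh : ∀ i (hi : i < n), b i ≤ (h ⟨i, hi⟩).val := by
    intro i
    induction i with
    | zero => intro _; omega
    | succ i ih =>
      intro hi
      have ih := ih (by omega)
      rw [bs]
      have hle := hm (show (⟨i, by omega⟩ : Fin n) ≤ ⟨i+1, hi⟩ by simp [Fin.le_def])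
      rw [Fin.le_def] at hle
      split_ifs with hb
      · have : h ⟨i, by omega⟩ ≠ h ⟨i+1, hi⟩ := fun e => hb ⟨hi, hadj ⟨i, by omega⟩ ⟨i+1, hi⟩ rfl e⟩
        rw [Ne, Fin.ext_iff] at this
        omega
      · omega
  let k := b (n-1) + 1
  have hkt : k ≤ t := by
    have := bh (n-1) (by omega)
    have := (h ⟨n-1, by omega⟩).isLt
    omega
  let g : Fin n → Fin k := fun i => ⟨b i.val, by
    have := bmono (show i.val ≤ n - 1 by omega)
    omega⟩
  have hg : Monotone g := fun i j hij => bmono hij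
  have bsurj : ∀ N c, c ≤ b N → ∃ i, i ≤ N ∧ b i = c := by
    intro N
    induction N with
    | zero => intro c hc; exact ⟨0, le_rfl, by omega⟩
    | succ N ih =>
      intro c hc
      by_cases h' : c ≤ b N
      · obtain ⟨i, hi, h⟩ := ih c h'
        exact ⟨i, by omega, h⟩
      · refine ⟨N+1, le_rfl, ?_⟩
        have := bs N
        split_ifs at this <;> omega
  have hs : Function.Surjective g := by
    intro c
    obtain ⟨i, hi, hc⟩ := bsurj (n-1) c.val (by omega)
    exact ⟨⟨i, by omega⟩, Fin.ext hc⟩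
  have hstep : ∀ i (hi : i + 1 < n), b i = b (i+1) ↔
      (π ⟨i+1, hi⟩).val = (π ⟨i, by omega⟩).val + 1 := by
    intro i hi
    rw [bs]
    have : br i ↔ ¬ (π ⟨i+1, hi⟩).val = (π ⟨i, by omega⟩).val + 1 := by
      simp only [br]
      constructor
      · exact fun h h' => h ⟨hi, h'⟩
      · rintro h ⟨_, h'⟩; exact h h'
    by_cases hb : br i
    · simp [hb, this.1 hb]
    · simp only [hb, if_false, add_zero, true_iff]
      by_contra hc
      exact hb (this.2 hc)
  -- same block: increasing run
  have hrun : ∀ d i (hi : i + d < n), b i = b (i + d) →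
      (π ⟨i+d, hi⟩).val = (π ⟨i, by omega⟩).val + d := by
    intro d
    induction d with
    | zero => intro i hi _; rfl
    | succ d ih =>
      intro i hi he
      have h1 : b i ≤ b (i+d) := bmono (by omega)
      have h2 : b (i+d) ≤ b (i+(d+1)) := bmono (by omega)
      have h3 := ih i (by omega) (by omega)
      have h4 := (hstep (i+d) hi).1 (by rw [show i + d + 1 = i + (d+1) by omega]; omega)
      have h5 : (π ⟨i + (d+1), hi⟩).val = (π ⟨i + d + 1, hi⟩).val := rfl
      omega
  have hrun' : ∀ i j : Fin n, i ≤ j → g i = g j → (π j).val + i.val = (π i).val + j.val := by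
    intro i j hij he
    rw [Fin.le_def] at hij
    have hj : i.val + (j.val - i.val) = j.val := by omega
    have := hrun (j.val - i.val) i.val (by omega) (by rw [hj]; exact congrArg Fin.val he)
    have e : (⟨i.val + (j.val - i.val), by omega⟩ : Fin n) = j := Fin.ext hj
    rw [e] at this
    simp only [Fin.eta] at this
    omega
  have hsame : ∀ i j : Fin n, g i = g j → (π i < π j ↔ i < j) := by
    intro i j he
    rw [Fin.lt_def, Fin.lt_def]
    rcases le_total i j with hij | hij
    · have := hrun' i j hij he
      omega
    · have := hrun' j i hij he.symm
      omega
  -- a point in another block cannot separate a block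
  have hsep0 : ∀ i i' j : Fin n, i ≤ i' → g i = g i' → g j ≠ g i → (π i < π j ↔ π i' < π j) := by
    intro i i' j hii he hne
    have h1 := hrun' i i' hii he
    rw [Fin.le_def] at hii
    rw [Fin.lt_def, Fin.lt_def]
    by_contra hcon
    have h2 : (π i).val ≤ (π j).val ∧ (π j).val ≤ (π i').val := by omega
    -- position with that value
    have hlt : i.val + ((π j).val - (π i).val) < n := by omega
    let m : Fin n := ⟨i.val + ((π j).val - (π i).val), hlt⟩
    have him : i ≤ m := by rw [Fin.le_def]; exact Nat.le_add_right _ _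
    have hmi : m ≤ i' := by simp only [m, Fin.le_def]; omega
    have hgm : g i = g m := le_antisymm (hg him) (by rw [he]; exact hg hmi)
    have h3 := hrun' i m him hgm
    have : π m = π j := by
      apply Fin.ext
      simp only [m] at h3 ⊢
      omega
    have := π.injective this
    rw [← this] at hne
    exact hne hgm.symm
  have hsep : ∀ i i' j : Fin n, g i = g i' → g j ≠ g i → (π i < π j ↔ π i' < π j) := by
    intro i i' j he hne
    rcases le_total i i' with hh | hh
    · exact hsep0 i i' j hh he hne
    · exact (hsep0 i' i j hh he.symm (by rwa [← he])).symm
  have hsepR : ∀ i i' j : Fin n, g i = g i' → g j ≠ g i → (π j < π i ↔ π j < π i') := by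
    intro i i' j he hne
    have h1 := hsep i i' j he hne
    have e1 : π i ≠ π j := fun e => hne (by rw [π.injective e])
    have e2 : π i' ≠ π j := fun e => hne (by rw [he, π.injective e])
    rw [← not_le, ← not_le, le_iff_lt_or_eq, le_iff_lt_or_eq, h1]
    simp [e1, e2]
  let s := Function.surjInv hs
  have hsg : ∀ c, g (s c) = c := Function.surjInv_eq hs
  obtain ⟨τ, hτ⟩ := exists_stand (fun c => π (s c)) 
    (fun x y hxy => Function.injective_surjInv hs (π.injective hxy))
  have hr : InflRel π τ g := by
    intro i j
    by_cases he : g i = g j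
    · rw [hsame i j he, he]; simp
    · simp only [he, false_and, or_false]
      rw [hτ, hsep i (s (g i)) j (hsg _).symm (Ne.symm he),
        hsepR j (s (g j)) (s (g i)) (hsg _).symm (by rw [hsg]; exact he)]
  refine ⟨k, hkt, τ, ?_, g, hg, hs, hr⟩
  intro c d hcd heq
  -- first position of block d
  have hex : ∃ i, b i = d.val := ⟨(s d).val, congrArg Fin.val (hsg d)⟩
  have hfb := Nat.find_spec hex
  have hmin := fun m => @Nat.find_min _ _ hex m
  have hlen : Nat.find hex < n := lt_of_le_of_lt (Nat.find_min' hex (congrArg Fin.val (hsg d))) (s d).isLt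
  generalize Nat.find hex = q at *
  obtain ⟨p, rfl⟩ : ∃ p, q = p + 1 := by
    refine ⟨q - 1, ?_⟩
    rcases Nat.eq_zero_or_pos q with h0 | h0
    · rw [h0, b0] at hfb; omega
    · omega
  have hbp : b p = c.val := by
    have h1 := bs p
    have h2 := hmin p (by omega)
    split_ifs at h1 <;> omega
  have hgi : g ⟨p, by omega⟩ = c := Fin.ext hbp
  have hgj : g ⟨p+1, hlen⟩ = d := Fin.ext hfb
  have hne : b p ≠ b (p+1) := by omega
  rw [Ne, hstep p hlen] at hne
  have h1 : π ⟨p, by omega⟩ < π ⟨p+1, hlen⟩ := by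
    rw [hr]; left; rw [hgi, hgj, Fin.lt_def]; omega
  rw [Fin.lt_def] at h1
  obtain ⟨m, hm'⟩ := π.surjective ⟨(π ⟨p, by omega⟩).val + 1, by have := (π ⟨p+1, hlen⟩).isLt; omega⟩
  have a1 : π ⟨p, by omega⟩ < π m := by rw [hm', Fin.lt_def]; simp
  have a2 : π m < π ⟨p+1, hlen⟩ := by rw [hm', Fin.lt_def]; simp only; omega
  rw [hr, hgi] at a1
  rw [hr, hgj] at a2
  have key : τ (g m) = τ c ∨ τ (g m) = τ d := by
    rw [Fin.ext_iff, Fin.ext_iff]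
    have b1 : (τ c).val ≤ (τ (g m)).val := by
      rcases a1 with a1 | a1
      · exact le_of_lt a1
      · rw [a1.1]
    have b2 : (τ (g m)).val ≤ (τ d).val := by
      rcases a2 with a2 | a2
      · exact le_of_lt a2
      · rw [a2.1]
    omega
  rcases key with hk | hk
  · have hk := τ.injective hk
    rw [hk] at a1
    simp only [lt_irrefl, true_and, false_or, Fin.lt_def] at a1
    have : b (p+1) ≤ b m.val := bmono (by omega)
    have e : b m.val = c.val := congrArg Fin.val hk
    omega
  · have hk := τ.injective hk
    rw [hk] at a2
    simp only [lt_irrefl, true_and, false_or, Fin.lt_def] at a2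
    exact hmin m.val a2 (congrArg Fin.val hk)

theorem exists_block {t n : ℕ} (c : Fin (t+1) → ℕ) (h0 : c 0 = 0)
    (hl : c (Fin.last t) = n) (i : ℕ) (hi : i < n) : ∃ k : Fin t, c k.castSucc ≤ i ∧ i < c k.succ := by
  by_contra! hc
  have : ∀ k : Fin (t+1), c k ≤ i := by
    intro k
    induction k using Fin.induction with
    | zero => omega
    | succ k ih => exact hc k ih
  have := this (Fin.last t)
  omega

theorem grid_isRed {t n : ℕ} (M : Fin t → Fin t → SignType)
    (h01 : ∀ k l, M k l = 0 ∨ M k l = 1)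
    (hcol : ∀ k, ∃! l, M k l = 1)
    (hrow : ∀ l, ∃! k, M k l = 1) (π : Equiv.Perm (Fin n)) (h : InGrid M π) :
    ∃ k, k ≤ t ∧ ∃ τ : Equiv.Perm (Fin k), IsRed π τ := by
  obtain ⟨c, r, hc, hr, c0, cl, r0, rl, hM⟩ := h
  choose X hX1 hX2 using fun i : Fin n => exists_block c c0 cl i.val i.isLt
  choose Y hY1 hY2 using fun i : Fin n => exists_block r r0 rl (π i).val (π i).isLt
  have hin : ∀ i, InBlock π c r (X i) (Y i) i := fun i => ⟨hX1 i, hX2 i, hY1 i, hY2 i⟩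
  have hM1 : ∀ i, M (X i) (Y i) = 1 := fun i =>
    (h01 _ _).resolve_left fun h => (hM _ _).2.2 h i (hin i)
  have hXY : ∀ i j, X i = X j → Y i = Y j := fun i j h =>
    (hcol (X i)).unique (hM1 i) (by rw [h]; exact hM1 j)
  refine exists_isRed π X ?_ ?_
  · intro i j hij
    by_contra hlt
    rw [not_le] at hlt
    have h1 := hX2 j
    have h2 := hX1 i
    have h3 : c (X j).succ ≤ c (X i).castSucc := hc (by
      rw [Fin.le_def]; rw [Fin.lt_def] at hlt; simp; omega)
    rw [Fin.le_def] at hij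
    omega
  · intro i j hij hx
    have hy := hXY i j hx
    have inc := (hM (X i) (Y i)).1 (hM1 i)
    have hj : InBlock π c r (X i) (Y i) j := by rw [hx, hy]; exact hin j
    have h1 : π i < π j := inc i j (hin i) hj (by rw [Fin.lt_def]; omega)
    by_contra hne
    rw [Fin.lt_def] at h1
    obtain ⟨m, hm⟩ := π.surjective ⟨(π i).val + 1, by have := (π j).isLt; omega⟩
    have hm := congrArg Fin.val hm
    simp only at hm
    have e1 := (hin i).2.2.1
    have e2 := hj.2.2.2
    have hMm : M (X m) (Y i) = 1 := (h01 _ _).resolve_left fun h =>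
      (hM _ _).2.2 h m ⟨hX1 m, hX2 m, by omega, by omega⟩
    have hXm : X m = X i := (hrow (Y i)).unique hMm (hM1 i)
    have hmb : InBlock π c r (X i) (Y i) m := ⟨by rw [← hXm]; exact hX1 m,
      by rw [← hXm]; exact hX2 m, by omega, by omega⟩
    have nmi : m ≠ i := by rintro rfl; omega
    have nmj : m ≠ j := by rintro rfl; omega
    rw [Ne, Fin.ext_iff] at nmi nmj
    rcases lt_trichotomy m.val i.val with hh | hh | hh
    · have := inc m i hmb (hin i) hh
      rw [Fin.lt_def] at this; omega
    · omega
    · have := inc j m hj hmb (by rw [Fin.lt_def]; omega)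
      rw [Fin.lt_def] at this; omega

/-- **Theorem (Atkinson).** If `M` is a permutation matrix (a square 0/1 matrix with exactly
one `1` in each row and each column), then every permutation class contained in `Grid(M)`
has eventually polynomial enumeration. -/
theorem permutation_matrix_grid_polynomial (t : ℕ) (M : Fin t → Fin t → SignType)
    (h01 : ∀ k l, M k l = 0 ∨ M k l = 1)
    (hcol : ∀ k, ∃! l, M k l = 1)
    (hrow : ∀ l, ∃! k, M k l = 1)
    (C : ∀ n : ℕ, Set (Equiv.Perm (Fin n))) (hC : IsPermClass C)
    (hsub : ∀ n : ℕ, ∀ π ∈ C n, InGrid M π) :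
    ∃ (p : Polynomial ℚ) (N : ℕ), ∀ n : ℕ, N ≤ n →
      (Nat.card (C n) : ℚ) = p.eval (n : ℚ) := by
  classical
  have e : EvPoly (fun n => ∑ k ∈ Finset.range (t+1),
      ∑ τ ∈ (Finset.univ : Finset (Equiv.Perm (Fin k))).filter Reduced,
        (cnt {a | (fun c => a c + 1) ∈ Dset C τ} (n - k) : ℚ)) := by
    refine EvPoly.sum _ _ fun k _ => EvPoly.sum _ _ fun τ _ => ?_
    refine EvPoly.shift (cnt_evPoly _ ?_) k
    intro a b hab ha
    exact Dset_lower hC τ (fun c => Nat.add_le_add_right (hab c) 1) ha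
  refine e.congr t fun n hn => ?_
  have key : Nat.card (C n) = ∑ k ∈ Finset.range (t+1),
      ∑ τ ∈ (Finset.univ : Finset (Equiv.Perm (Fin k))).filter Reduced,
        {π | π ∈ C n ∧ IsRed π τ}.ncard := by
    rw [Nat.card_coe_set_eq, Finset.sum_sigma']
    simp only [Set.ncard_eq_toFinset_card']
    rw [← Finset.card_biUnion]
    · congr 1
      ext π
      simp only [Set.mem_toFinset, Finset.mem_biUnion, Finset.mem_sigma, Finset.mem_range,
        Finset.mem_filter, Finset.mem_univ, true_and, Set.mem_ofPred_eq, Sigma.exists]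
      constructor
      · intro hπ
        obtain ⟨k, hk, τ, hτ⟩ := grid_isRed M h01 hcol hrow π (hsub n π hπ)
        exact ⟨k, τ, ⟨by omega, hτ.1⟩, hπ, hτ⟩
      · rintro ⟨_, _, _, h, _⟩
        exact h
    · rintro ⟨k, τ⟩ _ ⟨k', τ'⟩ _ hne
      rw [Function.onFun, Finset.disjoint_left]
      intro π h1 h2
      simp only [Set.mem_toFinset, Set.mem_ofPred_eq] at h1 h2
      apply hne
      obtain rfl := isRed_k_unique h1.2 h2.2
      obtain rfl := isRed_τ_unique h1.2 h2.2
      rfl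
  rw [key]
  push_cast
  refine Finset.sum_congr rfl fun k hk => Finset.sum_congr rfl fun τ hτ => ?_
  rw [Finset.mem_range] at hk
  rw [card_isRed τ (Finset.mem_filter.1 hτ).2 n (by omega)]
end

section
/- If M is a matrix with entries in {0, 1, −1} whose bipartite graph G(M) is a star (possibly together with isolated vertices), then every permutation class C contained in Grid(M) has a rational generating function ∑_{n≥0} |C_n| x^n. -/
/-- The bipartite graph `G(M)` is a star (possibly together with isolated vertices):
all edges share a common vertex, which is either a column vertex or a row vertex. -/
def IsStarMat {t u : ℕ} (M : Fin t → Fin u → SignType) : Prop :=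
  (∃ k₀ : Fin t, ∀ (k : Fin t) (l : Fin u), M k l ≠ 0 → k = k₀) ∨
  (∃ l₀ : Fin u, ∀ (k : Fin t) (l : Fin u), M k l ≠ 0 → l = l₀)


/-- rationality of a power series -/
def StarGrid.Rat (F : PowerSeries ℚ) : Prop :=
  ∃ p q : Polynomial ℚ, q ≠ 0 ∧ F * (q : PowerSeries ℚ) = (p : PowerSeries ℚ)

namespace StarGrid

theorem count_succ {A S : Type*} [Fintype A] (M : DFA A S) (s : S) (n : ℕ) :
    Nat.card {w : Fin (n + 1) → A // M.evalFrom s (List.ofFn w) ∈ M.accept} =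
      ∑ a : A, Nat.card {w : Fin n → A // M.evalFrom (M.step s a) (List.ofFn w) ∈ M.accept} := by
  classical
  rw [← Nat.card_sigma]
  refine Nat.card_congr ?_
  refine ⟨fun w => ⟨w.1 0, ⟨Fin.tail w.1, ?_⟩⟩, fun p => ⟨Fin.cons p.1 p.2.1, ?_⟩, ?_, ?_⟩
  · have := w.2
    rw [List.ofFn_succ, DFA.evalFrom_cons] at this
    exact this
  · have := p.2.2
    rw [List.ofFn_succ, DFA.evalFrom_cons]
    simpa using this
  · intro w
    apply Subtype.ext
    exact Fin.cons_self_tail w.1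
  · rintro ⟨a, w, hw⟩
    rfl

theorem transfer {S : Type*} [Fintype S] [DecidableEq S] (T : Matrix S S ℚ) (f : ℕ → S → ℚ)
    (hf : ∀ n, f (n + 1) = T.mulVec (f n)) (s : S) : Rat (PowerSeries.mk fun n => f n s) := by
  let F : S → PowerSeries ℚ := fun s => PowerSeries.mk fun n => f n s
  let B : Matrix S S (Polynomial ℚ) := 1 - (Polynomial.X : Polynomial ℚ) • T.map Polynomial.C
  let φ : Polynomial ℚ →+* PowerSeries ℚ := Polynomial.coeToPowerSeries.ringHom
  have hB : (B.map φ).mulVec F = fun s => φ (Polynomial.C (f 0 s)) := by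
    funext s
    have : (B.map φ).mulVec F s = F s - PowerSeries.X * ∑ j, PowerSeries.C (T s j) * F j := by
      simp only [Matrix.mulVec, dotProduct, B, Matrix.map_apply, Matrix.sub_apply,
        Matrix.smul_apply, map_sub, sub_mul, Finset.sum_sub_distrib, smul_eq_mul, map_mul,
        Finset.mul_sum]
      congr 1
      · simp [Matrix.one_apply, apply_ite φ, ite_mul]
      · refine Finset.sum_congr rfl fun j _ => ?_
        simp [φ, mul_assoc]
    rw [this]
    ext n
    cases n with
    | zero => simp [F, φ, PowerSeries.coeff_zero_eq_constantCoeff]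
    | succ n =>
      rw [map_sub, PowerSeries.coeff_succ_X_mul, map_sum]
      simp [F, φ, hf, Matrix.mulVec, dotProduct]
  have hdet : φ B.det * F s = φ ((B.adjugate.mulVec fun s => Polynomial.C (f 0 s)) s) := by
    have h1 := congrArg (fun v => ((B.map φ).adjugate.mulVec v) s) hB
    simp only [Matrix.mulVec_mulVec, Matrix.adjugate_mul, Matrix.smul_mulVec, Matrix.one_mulVec,
      Pi.smul_apply, smul_eq_mul] at h1
    have h2 : (B.map φ).det = φ B.det := by
      rw [RingHom.map_det]; rfl
    have h3 : (B.map φ).adjugate = B.adjugate.map φ := by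
      have := RingHom.map_adjugate φ B
      exact this.symm
    rw [h2, h3] at h1
    rw [h1]
    simp [Matrix.mulVec, dotProduct, map_sum]
  refine ⟨(B.adjugate.mulVec fun s => Polynomial.C (f 0 s)) s, B.det, ?_,
    (mul_comm _ _).trans hdet⟩
  · intro h0
    have h1 : B.det.eval 0 = 1 := by
      have := RingHom.map_det (Polynomial.evalRingHom (0 : ℚ)) B
      rw [Polynomial.coe_evalRingHom] at this
      rw [this]
      have : (Polynomial.evalRingHom (0 : ℚ)).mapMatrix B = 1 := by
        ext i j
        simp [B, Matrix.one_apply, apply_ite (Polynomial.eval (0:ℚ))]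
      rw [this, Matrix.det_one]
    rw [h0] at h1
    simp at h1

theorem rat_of_regular {A : Type} [Fintype A] (L : Language A) (hL : L.IsRegular) :
    Rat (PowerSeries.mk fun n => (Nat.card {w : Fin n → A // List.ofFn w ∈ L} : ℚ)) := by
  classical
  obtain ⟨S, hS, M, rfl⟩ := hL
  refine transfer (fun s s' => ∑ a : A, if M.step s a = s' then (1 : ℚ) else 0)
    (fun n s => (Nat.card {w : Fin n → A // M.evalFrom s (List.ofFn w) ∈ M.accept} : ℚ)) ?_
    M.start
  intro n
  funext s
  rw [count_succ]
  simp only [Matrix.mulVec, dotProduct, Finset.sum_mul]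
  rw [Finset.sum_comm]
  simp

theorem higman {A : Type} [Finite A] (f : ℕ → List A) :
    ∃ g : ℕ ↪o ℕ, ∀ m n, m ≤ n → (f (g m)).Sublist (f (g n)) := by
  have h := Set.PartiallyWellOrderedOn.partiallyWellOrderedOn_sublistForall₂ (α := A) (· = ·)
    (s := Set.univ) (Set.toFinite _).partiallyWellOrderedOn
  have : IsPreorder (List A) (List.SublistForall₂ (· = ·)) :=
    { refl := fun a => List.SublistForall₂.is_refl.refl a
      trans := fun a b c => List.SublistForall₂.is_trans.trans a b c }
  obtain ⟨g, hg⟩ := h.exists_monotone_subseq (f := f) (by simp)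
  refine ⟨g, fun m n hmn => ?_⟩
  obtain ⟨l, h1, h2⟩ := List.sublistForall₂_iff.1 (hg m n hmn)
  rw [List.forall₂_eq_eq_eq] at h1
  exact h1 ▸ h2

theorem regular_of_down {A : Type} [Finite A] (L : Language A)
    (hL : ∀ x y : List A, x.Sublist y → y ∈ L → x ∈ L) : L.IsRegular := by
  apply Language.IsRegular.of_finite_range_leftQuotient
  by_contra hinf
  -- a sequence of words with pairwise distinct quotients
  obtain ⟨e⟩ : Nonempty (ℕ ↪ Set.range L.leftQuotient) :=
    ⟨Set.Infinite.natEmbedding _ hinf⟩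
  choose w hw using fun n => (e n).2
  obtain ⟨g, hg⟩ := higman w
  have hanti : ∀ m n, m ≤ n → L.leftQuotient (w (g n)) ≤ L.leftQuotient (w (g m)) := by
    intro m n hmn y hy
    exact hL _ _ ((hg m n hmn).append (List.Sublist.refl y)) hy
  have hne : ∀ n, ∃ y, y ∈ L.leftQuotient (w (g n)) ∧ y ∉ L.leftQuotient (w (g (n+1))) := by
    intro n
    by_contra hcon
    push Not at hcon
    have : L.leftQuotient (w (g n)) = L.leftQuotient (w (g (n+1))) :=
      le_antisymm hcon (hanti n (n+1) (Nat.le_succ n))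
    rw [hw, hw] at this
    have := g.injective (e.injective (Subtype.ext this))
    omega
  choose y hy hy' using hne
  obtain ⟨gg, hgg⟩ := higman y
  have hlt : gg 0 < gg 1 := gg.strictMono Nat.zero_lt_one
  apply hy' (gg 0)
  exact hL _ _ ((List.Sublist.refl _).append (hgg 0 1 (Nat.zero_le _)))
    (hanti _ _ hlt (hy (gg 1)))

/-- words `x ++ j :: y` with `x` avoiding `P` and `y` avoiding `Q` -/
def kLang {A : Type} (j : A) (P Q : A → Prop) : Language A :=
  {l | ∃ x y : List A, l = x ++ j :: y ∧ (∀ a ∈ x, ¬ P a) ∧ (∀ a ∈ y, ¬ Q a)}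

theorem kLang_snoc {A : Type} (j : A) (P Q : A → Prop) (l : List A) (a : A) :
    l ++ [a] ∈ kLang j P Q ↔ ((∀ a ∈ l, ¬ P a) ∧ a = j) ∨ (l ∈ kLang j P Q ∧ ¬ Q a) := by
  constructor
  · rintro ⟨x, y, h, hx, hy⟩
    rcases List.eq_nil_or_concat y with rfl | ⟨y', b, rfl⟩
    · left
      have := List.append_inj' h rfl
      simp at this
      exact ⟨this.1 ▸ hx, this.2⟩
    · right
      have h' : l ++ [a] = (x ++ j :: y') ++ [b] := by rw [h]; simp
      have := List.append_inj' h' rfl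
      simp at this
      obtain ⟨rfl, rfl⟩ := this
      exact ⟨⟨x, y', rfl, hx, fun c hc => hy c (by simp [hc])⟩, hy _ (by simp)⟩
  · rintro (⟨h, rfl⟩ | ⟨⟨x, y, rfl, hx, hy⟩, hQ⟩)
    · exact ⟨l, [], rfl, h, by simp⟩
    · refine ⟨x, y ++ [a], by simp, hx, ?_⟩
      intro c hc
      simp at hc
      rcases hc with hc | rfl
      · exact hy c hc
      · exact hQ

theorem kLang_regular {A : Type} (j : A) (P Q : A → Prop) : (kLang j P Q).IsRegular := by
  classical
  let M : DFA A (Prop × Prop) :=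
    ⟨fun s a => (s.1 ∧ ¬ P a, (s.1 ∧ a = j) ∨ (s.2 ∧ ¬ Q a)), (True, False), {s | s.2}⟩
  refine ⟨Prop × Prop, inferInstance, M, ?_⟩
  have : ∀ l, M.eval l = ((∀ a ∈ l, ¬ P a), l ∈ kLang j P Q) := by
    intro l
    induction l using List.reverseRecOn with
    | nil =>
      have : [] ∉ kLang j P Q := by rintro ⟨x, y, h, -⟩; simp at h
      simp [M, this]
    | append_singleton l a ih =>
      rw [DFA.eval_append_singleton, ih, kLang_snoc]
      refine Prod.ext ?_ rfl
      simp only [M, List.mem_append, List.mem_singleton, or_imp, forall_and, forall_eq]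
  ext l
  rw [DFA.mem_accepts, this]
  rfl

theorem kLang_ofFn {A : Type} (j : A) (P Q : A → Prop) {n : ℕ} (w : Fin n → A) :
    List.ofFn w ∈ kLang j P Q ↔
      ∃ v, w v = j ∧ (∀ v' < v, ¬ P (w v')) ∧ (∀ v' > v, ¬ Q (w v')) := by
  constructor
  · rintro ⟨x, y, h, hx, hy⟩
    have hlen : n = x.length + (y.length + 1) := by
      have := congrArg List.length h
      simpa using this
    have hget : ∀ v : Fin n, (x ++ j :: y)[(v : ℕ)]? = some (w v) := by
      intro v
      rw [← h]; simp
    refine ⟨⟨x.length, by omega⟩, ?_, ?_, ?_⟩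
    · have := hget ⟨x.length, by omega⟩
      simpa using this.symm
    · intro v' hv'
      have h1 := hget v'
      rw [List.getElem?_append_left hv'] at h1
      exact hx _ (List.mem_of_getElem? h1)
    · intro v' hv'
      have h1 := hget v'
      have h2 : x.length < (v' : ℕ) := hv'
      rw [List.getElem?_append_right h2.le] at h1
      obtain ⟨m, hm⟩ : ∃ m, (v' : ℕ) - x.length = m + 1 := ⟨v' - x.length - 1, by omega⟩
      rw [hm, List.getElem?_cons_succ] at h1
      exact hy _ (List.mem_of_getElem? h1)
  · rintro ⟨v, rfl, h1, h2⟩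
    refine ⟨(List.ofFn w).take v, (List.ofFn w).drop (v + 1), ?_, ?_, ?_⟩
    · conv_lhs => rw [← List.take_append_drop v (List.ofFn w)]
      rw [List.drop_eq_getElem_cons (by simp)]
      simp
    · intro a ha
      obtain ⟨i, hi, rfl⟩ := List.mem_iff_getElem.1 ha
      simp at hi ⊢
      exact h1 ⟨i, by omega⟩ (by simpa [Fin.lt_def] using hi)
    · intro a ha
      obtain ⟨i, hi, rfl⟩ := List.mem_iff_getElem.1 ha
      simp at hi ⊢
      exact h2 ⟨v + 1 + i, by omega⟩ (by simp [Fin.lt_def]; omega)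

theorem regular_iUnion {A ι : Type} [Finite ι] (L : ι → Language A)
    (h : ∀ i, (L i).IsRegular) : Language.IsRegular ({l | ∃ i, l ∈ L i} : Language A) := by
  classical
  have := Fintype.ofFinite ι
  suffices H : ∀ s : Finset ι, Language.IsRegular ({l | ∃ i ∈ s, l ∈ L i} : Language A) by
    simpa using H Finset.univ
  intro s
  induction s using Finset.induction_on with
  | empty =>
    simp only [Finset.notMem_empty, false_and, exists_false]
    exact ⟨Unit, inferInstance, ⟨fun s _ => s, (), ∅⟩, rfl⟩
  | insert a s ha ih =>
    have := (h a).add ih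
    let K : Language A := {l | ∃ i ∈ s, l ∈ L i}
    have e : ({l | ∃ i ∈ insert a s, l ∈ L i} : Language A) =
        L a + K := by
      apply Set.ext
      intro l
      simp only [Set.mem_ofPred_eq, Finset.mem_insert, exists_eq_or_imp]
      rfl
    rw [e]
    exact this

end StarGrid

namespace StarGrid

section enc
variable {A : Type} [LinearOrder A] (s : A → Prop) [DecidablePred s]

/-- sorting key of the value `v` in the gridded permutation with word `w` -/
def key {n : ℕ} (w : Fin n → A) (v : Fin n) : A ×ₗ ℤ :=
  toLex (w v, if s (w v) then (v : ℤ) else -(v : ℤ))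

theorem key_lt {n : ℕ} (w : Fin n → A) (v v' : Fin n) :
    key s w v < key s w v' ↔ w v < w v' ∨ (w v = w v' ∧ if s (w v) then v < v' else v' < v) := by
  unfold key
  rw [Prod.Lex.toLex_lt_toLex]
  apply or_congr Iff.rfl
  apply and_congr_right
  intro h
  simp only at h
  rw [← h]
  split_ifs <;> simp

theorem key_inj {n : ℕ} (w : Fin n → A) : Function.Injective (key s w) := by
  intro v v' h
  by_contra hne
  rcases lt_or_gt_of_ne hne with h1 | h1
  · have h2 : w v = w v' := congrArg (fun x => (ofLex x).1) h
    have h3 := (key_lt s w v v').not.1 (by rw [h]; exact lt_irrefl _)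
    have h4 := (key_lt s w v' v).not.1 (by rw [h]; exact lt_irrefl _)
    rw [h2] at h3
    by_cases hs : s (w v') <;> simp_all
  · have h2 : w v = w v' := congrArg (fun x => (ofLex x).1) h
    have h3 := (key_lt s w v v').not.1 (by rw [h]; exact lt_irrefl _)
    have h4 := (key_lt s w v' v).not.1 (by rw [h]; exact lt_irrefl _)
    rw [h2] at h3
    by_cases hs : s (w v') <;> simp_all

/-- `w` encodes a gridding of `π` -/
def Enc {n : ℕ} (w : Fin n → A) (π : Equiv.Perm (Fin n)) : Prop := StrictMono (key s w ∘ π)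

theorem enc_unique {n : ℕ} {w : Fin n → A} {π π' : Equiv.Perm (Fin n)} (h : Enc s w π)
    (h' : Enc s w π') : π = π' := by
  have := Tuple.unique_monotone h.monotone h'.monotone
  ext i
  exact congrArg _ (key_inj s w (congrFun this i))

theorem enc_exists {n : ℕ} (w : Fin n → A) : ∃ π, Enc s w π :=
  ⟨Tuple.sort (key s w), (Tuple.monotone_sort _).strictMono_of_injective
    ((key_inj s w).comp (Equiv.injective _))⟩

theorem enc_key {n : ℕ} {w : Fin n → A} {π : Equiv.Perm (Fin n)} (h : Enc s w π) (v v' : Fin n) :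
    key s w v < key s w v' ↔ π.symm v < π.symm v' := by
  have := h.lt_iff_lt (a := π.symm v) (b := π.symm v')
  simpa using this

theorem enc_contains {k n : ℕ} {w : Fin n → A} {w' : Fin k → A} {π : Equiv.Perm (Fin n)}
    {π' : Equiv.Perm (Fin k)} (h : Enc s w π) (h' : Enc s w' π') (f : Fin k → Fin n)
    (hf : StrictMono f) (hw : ∀ i, w' i = w (f i)) : PermContains π' π := by
  refine ⟨fun i => π.symm (f (π' i)), ?_, ?_⟩
  · intro i j hij
    have h1 := h' hij
    simp only [Function.comp] at h1
    rw [key_lt] at h1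
    show π.symm (f (π' i)) < π.symm (f (π' j))
    rw [← enc_key s h, key_lt]
    simpa [hw, hf.lt_iff_lt] using h1
  · intro i j
    simp [hf.lt_iff_lt]

/-- the gridding can be improved by moving a single point to an earlier column -/
def Red {n : ℕ} (w : Fin n → A) (π : Equiv.Perm (Fin n)) : Prop :=
  ∃ v k, k < w v ∧ Enc s (Function.update w v k) π

theorem enc_irred_exists [Finite A] {n : ℕ} {w : Fin n → A} {π : Equiv.Perm (Fin n)}
    (h : Enc s w π) : ∃ w, Enc s w π ∧ ¬ Red s w π := by
  obtain ⟨w₀, hw₀⟩ := (Set.toFinite {w | Enc s w π}).exists_minimal ⟨w, h⟩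
  refine ⟨w₀, hw₀.1, ?_⟩
  rintro ⟨v, k, hk, he⟩
  have h1 : Function.update w₀ v k ≤ w₀ := update_le_self_iff.2 hk.le
  have h2 := hw₀.2 he h1 v
  simp at h2
  exact absurd h2 (not_le.2 hk)

theorem red_of_first_diff {n : ℕ} {w w' : Fin n → A} {π : Equiv.Perm (Fin n)}
    (h : Enc s w π) (h' : Enc s w' π) (i₀ : Fin n) (hlt : ∀ i < i₀, w (π i) = w' (π i))
    (h0 : w' (π i₀) < w (π i₀)) : Red s w π := by
  refine ⟨π i₀, w' (π i₀), h0, ?_⟩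
  intro i j hij
  have h1 := h hij
  have h2 := h' hij
  simp only [Function.comp] at h1 h2 ⊢
  rw [key_lt] at h1 h2 ⊢
  rcases lt_trichotomy j i₀ with hj | rfl | hj
  · have hi := hij.trans hj
    rw [Function.update_of_ne (by simpa using hi.ne), Function.update_of_ne (by simpa using hj.ne)]
    exact h1
  · rw [Function.update_of_ne (by simpa using hij.ne), Function.update_self]
    rw [hlt i hij]
    exact h2
  · rw [Function.update_of_ne (a := π j) (by simpa using hj.ne')]
    by_cases hi : i = i₀
    · subst hi
      rw [Function.update_self]
      left
      refine h0.trans_le ?_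
      rcases h1 with h1 | h1
      · exact h1.le
      · exact h1.1.le
    · rw [Function.update_of_ne (by simpa using hi)]
      exact h1

theorem enc_irred_unique {n : ℕ} {w w' : Fin n → A} {π : Equiv.Perm (Fin n)}
    (h : Enc s w π) (h' : Enc s w' π) (hr : ¬ Red s w π) (hr' : ¬ Red s w' π) : w = w' := by
  classical
  by_contra hne
  have hex : ∃ i, w (π i) ≠ w' (π i) := by
    by_contra hcon
    push Not at hcon
    apply hne
    funext v
    simpa using hcon (π.symm v)
  obtain ⟨i₀, hi₀, hmin⟩ := WellFounded.has_min (wellFounded_lt (α := Fin n))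
    {i | w (π i) ≠ w' (π i)} hex
  have hlt : ∀ i < i₀, w (π i) = w' (π i) := by
    intro i hi
    by_contra hc
    exact hmin i hc hi
  rcases lt_or_gt_of_ne hi₀ with hl | hl
  · exact hr' (red_of_first_diff s h' h i₀ (fun i hi => (hlt i hi).symm) hl)
  · exact hr (red_of_first_diff s h h' i₀ hlt hl)

theorem red_iff {n : ℕ} {w : Fin n → A} {π : Equiv.Perm (Fin n)} (h : Enc s w π) :
    Red s w π ↔ ∃ k j, k < j ∧ ∃ v, w v = j ∧
      (∀ v' < v, ¬ ((k < w v' ∧ w v' < j) ∨ (w v' = k ∧ ¬ s k) ∨ (w v' = j ∧ s j))) ∧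
      (∀ v' > v, ¬ ((k < w v' ∧ w v' < j) ∨ (w v' = k ∧ s k) ∨ (w v' = j ∧ ¬ s j))) := by
  constructor
  · rintro ⟨v, k, hk, he⟩
    refine ⟨k, w v, hk, v, rfl, ?_, ?_⟩
    all_goals
      intro v' hv'
      have h1 := (enc_key s h v' v).trans (enc_key s he v' v).symm
      rw [key_lt, key_lt, Function.update_self, Function.update_of_ne (by rintro rfl; exact lt_irrefl _ hv')] at h1
      have h3 := hv'.not_gt
      grind
  · rintro ⟨k, j, hk, v, rfl, hl, hr⟩
    refine ⟨v, k, hk, ?_⟩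
    intro i i' hij
    have h1 := h hij
    simp only [Function.comp] at h1 ⊢
    rw [key_lt] at h1 ⊢
    have hne : π i ≠ π i' := by simpa using hij.ne
    generalize π i = a at *
    generalize π i' = b at *
    by_cases ha : a = v
    · subst ha
      rw [Function.update_self, Function.update_of_ne hne.symm]
      rcases lt_or_gt_of_ne hne with hv | hv
      · have := hr b hv
        have h3 := hv.not_gt
        grind
      · have := hl b hv
        have h3 := hv.not_gt
        grind
    · rw [Function.update_of_ne ha]
      by_cases hb : b = v
      · subst hb
        rw [Function.update_self]
        rcases lt_or_gt_of_ne hne with hv | hv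
        · have := hl a hv
          have h3 := hv.not_gt
          grind
        · have := hr a hv
          have h3 := hv.not_gt
          grind
      · rw [Function.update_of_ne hb]
        exact h1

end enc

end StarGrid

namespace StarGrid

/-- words of griddings of members of the class -/
def cLang {A : Type} [LinearOrder A] (s : A → Prop) [DecidablePred s]
    (C : ∀ n : ℕ, Set (Equiv.Perm (Fin n))) : Language A :=
  {l | ∃ (n : ℕ) (w : Fin n → A) (π : Equiv.Perm (Fin n)),
    l = List.ofFn w ∧ Enc s w π ∧ π ∈ C n}

theorem cLang_ofFn {A : Type} [LinearOrder A] (s : A → Prop) [DecidablePred s]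
    (C : ∀ n : ℕ, Set (Equiv.Perm (Fin n))) {n : ℕ} (w : Fin n → A) :
    List.ofFn w ∈ cLang s C ↔ ∃ π ∈ C n, Enc s w π := by
  constructor
  · rintro ⟨m, w', π, h, he, hπ⟩
    have hmn : n = m := by simpa using congrArg List.length h
    subst hmn
    have := List.ofFn_injective h
    subst this
    exact ⟨π, hπ, he⟩
  · rintro ⟨π, hπ, he⟩
    exact ⟨n, w, π, rfl, he, hπ⟩

theorem cLang_down {A : Type} [LinearOrder A] (s : A → Prop) [DecidablePred s]
    (C : ∀ n : ℕ, Set (Equiv.Perm (Fin n))) (hC : IsPermClass C) (x y : List A)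
    (hxy : x.Sublist y) (hy : y ∈ cLang s C) : x ∈ cLang s C := by
  obtain ⟨f, hf⟩ := List.sublist_iff_exists_fin_orderEmbedding_get_eq.1 hxy
  rw [← List.ofFn_get y, cLang_ofFn] at hy
  obtain ⟨π, hπ, he⟩ := hy
  rw [← List.ofFn_get x, cLang_ofFn]
  obtain ⟨π', he'⟩ := enc_exists s x.get
  exact ⟨π', hC _ _ π' π hπ (enc_contains s he he' f f.strictMono hf), he'⟩

theorem rat_of_enc {A : Type} [LinearOrder A] [Finite A] (s : A → Prop)
    (C : ∀ n : ℕ, Set (Equiv.Perm (Fin n))) (hC : IsPermClass C)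
    (hsub : ∀ n : ℕ, ∀ π ∈ C n, ∃ w : Fin n → A, ∀ i j, i < j →
      w (π i) < w (π j) ∨ (w (π i) = w (π j) ∧ (s (w (π i)) → π i < π j) ∧
        (¬ s (w (π i)) → π j < π i))) :
    Rat (PowerSeries.mk fun n => (Nat.card (C n) : ℚ)) := by
  classical
  have := Fintype.ofFinite A
  let K : Language A := {l | ∃ p : {p : A × A // p.1 < p.2}, l ∈ kLang p.1.2
    (fun a => (p.1.1 < a ∧ a < p.1.2) ∨ (a = p.1.1 ∧ ¬ s p.1.1) ∨ (a = p.1.2 ∧ s p.1.2))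
    (fun a => (p.1.1 < a ∧ a < p.1.2) ∨ (a = p.1.1 ∧ s p.1.1) ∨ (a = p.1.2 ∧ ¬ s p.1.2))}
  have hK : K.IsRegular := regular_iUnion _ fun p => kLang_regular _ _ _
  have hKmem : ∀ {n : ℕ} {w : Fin n → A} {π : Equiv.Perm (Fin n)}, Enc s w π →
      (List.ofFn w ∈ K ↔ Red s w π) := by
    intro n w π h
    rw [red_iff s h]
    constructor
    · rintro ⟨⟨⟨k, j⟩, hkj⟩, hl⟩
      exact ⟨k, j, hkj, (kLang_ofFn _ _ _ w).1 hl⟩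
    · rintro ⟨k, j, hkj, hl⟩
      exact ⟨⟨⟨k, j⟩, hkj⟩, (kLang_ofFn _ _ _ w).2 hl⟩
  let L : Language A := cLang s C ⊓ Kᶜ
  have hL : L.IsRegular := (regular_of_down _ (cLang_down s C hC)).inf hK.compl
  have key := rat_of_regular L hL
  have hLmem : ∀ {n : ℕ} (w : Fin n → A),
      List.ofFn w ∈ L ↔ ∃ π ∈ C n, Enc s w π ∧ ¬ Red s w π := by
    intro n w
    have h1 : List.ofFn w ∈ L ↔ List.ofFn w ∈ cLang s C ∧ List.ofFn w ∉ K := Iff.rfl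
    rw [h1, cLang_ofFn]
    constructor
    · rintro ⟨⟨π, hπ, he⟩, hn⟩
      exact ⟨π, hπ, he, fun h => hn ((hKmem he).2 h)⟩
    · rintro ⟨π, hπ, he, hn⟩
      exact ⟨⟨π, hπ, he⟩, fun h => hn ((hKmem he).1 h)⟩
  have hcard : ∀ n, Nat.card {w : Fin n → A // List.ofFn w ∈ L} = Nat.card (C n) := by
    intro n
    have hch : ∀ w : {w : Fin n → A // List.ofFn w ∈ L}, ∃ π : C n,
        Enc s w.1 π.1 ∧ ¬ Red s w.1 π.1 := by
      rintro ⟨w, hw⟩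
      obtain ⟨π, hπ, h⟩ := (hLmem w).1 hw
      exact ⟨⟨π, hπ⟩, h⟩
    choose F hF using hch
    refine Nat.card_congr (Equiv.ofBijective F ⟨?_, ?_⟩)
    · intro w w' hww
      have h1 := hF w
      have h2 := hF w'
      rw [← hww] at h2
      exact Subtype.ext (enc_irred_unique s h1.1 h2.1 h1.2 h2.2)
    · rintro ⟨π, hπ⟩
      obtain ⟨w₀, hw₀⟩ := hsub n π hπ
      have he₀ : Enc s w₀ π := by
        intro i j hij
        simp only [Function.comp]
        rw [key_lt]
        rcases hw₀ i j hij with h | ⟨h, h1, h2⟩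
        · exact Or.inl h
        · refine Or.inr ⟨h, ?_⟩
          split_ifs with hs
          · exact h1 hs
          · exact h2 hs
      obtain ⟨w, he, hr⟩ := enc_irred_exists s he₀
      have hw : List.ofFn w ∈ L := (hLmem w).2 ⟨π, hπ, he, hr⟩
      exact ⟨⟨w, hw⟩, Subtype.ext (enc_unique s (hF ⟨w, hw⟩).1 he)⟩
  simpa only [hcard] using key

theorem exists_block {t n : ℕ} (c : Fin (t + 1) → ℕ) (h0 : c 0 = 0) (hl : c (Fin.last t) = n)
    (i : ℕ) (hi : i < n) : ∃ k : Fin t, c k.castSucc ≤ i ∧ i < c k.succ := by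
  by_contra hcon
  push Not at hcon
  have : ∀ k : Fin (t + 1), c k ≤ i := by
    intro k
    induction k using Fin.induction with
    | zero => omega
    | succ k ih => exact hcon k ih
  have := this (Fin.last t)
  omega

theorem row_case (t u : ℕ) (M : Fin t → Fin u → SignType) (l₀ : Fin u)
    (hM : ∀ (k : Fin t) (l : Fin u), M k l ≠ 0 → l = l₀)
    (C : ∀ n : ℕ, Set (Equiv.Perm (Fin n))) (hC : IsPermClass C)
    (hsub : ∀ n : ℕ, ∀ π ∈ C n, InGrid M π) :
    Rat (PowerSeries.mk fun n => (Nat.card (C n) : ℚ)) := by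
  classical
  refine rat_of_enc (A := {k : Fin t // M k l₀ ≠ 0}) (fun k => M k.1 l₀ = 1) C hC ?_
  intro n π hπ
  obtain ⟨c, r, hc, hr, hc0, hcl, hr0, hrl, hg⟩ := hsub n π hπ
  have hex : ∀ i : Fin n, ∃ k : {k : Fin t // M k l₀ ≠ 0}, InBlock π c r k.1 l₀ i := by
    intro i
    obtain ⟨k, hk1, hk2⟩ := exists_block c hc0 hcl i i.2
    obtain ⟨l, hl1, hl2⟩ := exists_block r hr0 hrl (π i) (π i).2
    have hb : InBlock π c r k l i := ⟨hk1, hk2, hl1, hl2⟩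
    have hne : M k l ≠ 0 := fun h => (hg k l).2.2 h i hb
    have := hM k l hne
    subst this
    exact ⟨⟨k, hne⟩, hb⟩
  choose g hgb using hex
  refine ⟨fun v => g (π.symm v), ?_⟩
  intro i j hij
  simp only [Equiv.symm_apply_apply]
  have hle : g i ≤ g j := by
    by_contra hlt
    have hlt : (g j).1 < (g i).1 := not_le.1 hlt
    have h1 : c (g j).1.succ ≤ c (g i).1.castSucc := hc (by
      simp only [Fin.le_def, Fin.val_succ, Fin.val_castSucc]; exact hlt)
    have h2 := (hgb j).2.1
    have h3 := (hgb i).1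
    have h4 : (i : ℕ) < j := hij
    omega
  rcases hle.lt_or_eq with h | h
  · exact Or.inl h
  · refine Or.inr ⟨h, ?_, ?_⟩
    · intro hs
      exact (hg _ _).1 hs i j (hgb i) (h ▸ hgb j) hij
    · intro hs
      have h0 := (g i).2
      have hs' : M (g i).1 l₀ = -1 := by
        revert hs h0
        generalize M (g i).1 l₀ = z
        revert z
        decide
      exact (hg _ _).2.1 hs' i j (hgb i) (h ▸ hgb j) hij

theorem app_inv {n : ℕ} (π : Equiv.Perm (Fin n)) (i : Fin n) : π (π⁻¹ i) = i :=
  π.apply_symm_apply i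

theorem inBlock_inv {n t u : ℕ} (π : Equiv.Perm (Fin n)) (c : Fin (t + 1) → ℕ)
    (r : Fin (u + 1) → ℕ) (k : Fin t) (l : Fin u) (i : Fin n) :
    InBlock π⁻¹ r c l k i ↔ InBlock π c r k l (π⁻¹ i) := by
  simp only [InBlock, app_inv]
  tauto

theorem inGrid_inv {n t u : ℕ} (M : Fin t → Fin u → SignType) (π : Equiv.Perm (Fin n))
    (h : InGrid M π) : InGrid (fun l k => M k l) π⁻¹ := by
  obtain ⟨c, r, hc, hr, hc0, hcl, hr0, hrl, hg⟩ := h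
  refine ⟨r, c, hr, hc, hr0, hrl, hc0, hcl, fun l k => ⟨?_, ?_, ?_⟩⟩
  · intro hM i j hi hj hij
    rw [inBlock_inv] at hi hj
    by_contra hcon
    rcases (not_lt.1 hcon).lt_or_eq with h | h
    · have := (hg k l).1 hM _ _ hj hi h
      simp only [app_inv] at this
      exact lt_asymm this hij
    · exact hij.ne' (π⁻¹.injective h)
  · intro hM i j hi hj hij
    rw [inBlock_inv] at hi hj
    by_contra hcon
    rcases (not_lt.1 hcon).lt_or_eq with h | h
    · have := (hg k l).2.1 hM _ _ hi hj h
      simp only [app_inv] at this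
      exact lt_asymm this hij
    · exact hij.ne (π⁻¹.injective h)
  · intro hM i hi
    rw [inBlock_inv] at hi
    exact (hg k l).2.2 hM _ hi

theorem contains_inv {k n : ℕ} (σ : Equiv.Perm (Fin k)) (π : Equiv.Perm (Fin n))
    (h : PermContains σ π) : PermContains σ⁻¹ π⁻¹ := by
  obtain ⟨f, hf, h⟩ := h
  refine ⟨fun v => π (f (σ⁻¹ v)), ?_, ?_⟩
  · intro i j hij
    have := (h (σ⁻¹ i) (σ⁻¹ j)).1 (by simpa using hij)
    exact this
  · intro i j
    simp [hf.lt_iff_lt]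

end StarGrid

/-- **Theorem (Albert–Atkinson–Ruškuc).** If `G(M)` is a star then every permutation class
contained in `Grid(M)` has a rational generating function `∑ |C_n| xⁿ = p(x)/q(x)`. -/
theorem star_grid_rational (t u : ℕ) (M : Fin t → Fin u → SignType) (hstar : IsStarMat M)
    (C : ∀ n : ℕ, Set (Equiv.Perm (Fin n))) (hC : IsPermClass C)
    (hsub : ∀ n : ℕ, ∀ π ∈ C n, InGrid M π) :
    ∃ p q : Polynomial ℚ, q ≠ 0 ∧
      (PowerSeries.mk fun n => (Nat.card (C n) : ℚ)) * (q : PowerSeries ℚ) =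
        (p : PowerSeries ℚ) := by
  rcases hstar with ⟨k₀, hk⟩ | ⟨l₀, hl⟩
  · have h := StarGrid.row_case u t (fun l k => M k l) k₀ (fun l k h => hk k l h)
      (fun n => {π | π⁻¹ ∈ C n})
      (fun k n σ π hπ h => hC k n σ⁻¹ π⁻¹ hπ (StarGrid.contains_inv σ π h))
      (fun n π hπ => by simpa using StarGrid.inGrid_inv M π⁻¹ (hsub n π⁻¹ hπ))
    have hcard : ∀ n, Nat.card {π : Equiv.Perm (Fin n) | π⁻¹ ∈ C n} = Nat.card (C n) := by
      intro n
      refine Nat.card_congr ((Equiv.inv (Equiv.Perm (Fin n))).subtypeEquiv ?_)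
      intro π
      rfl
    simp only [hcard] at h
    exact h
  · exact StarGrid.row_case t u M l₀ hl C hC hsub
end
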